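/- arXiv:1502.07618 — 3 statements merged into one kernel-verified Lean document; each statement's English description precedes it below -/
import Mathlib

section
/- Suppose the invertible RDS φ on 𝕊¹ is contractible and admits a reverse-stationary probability measure ρ that is atomless and has full support. Then φ is stably synchronising. -/
open MeasureTheory Filter Topology Set ENNReal

noncomputable section

/-- The natural projection `π : ℝ → 𝕊¹ = ℝ/ℤ`. -/
def circleProj (x : ℝ) : UnitAddCircle := (x : UnitAddCircle)

/-- `f` is an orientation-preserving homeomorphism of the circle: it admits a strictly
monotone degree-one lift. -/
def OrientPreserving (f : UnitAddCircle ≃ₜ UnitAddCircle) : Prop :=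
  ∃ F : ℝ → ℝ, StrictMono F ∧ (∀ x : ℝ, F (x + 1) = F x + 1) ∧
    ∀ x : ℝ, f (circleProj x) = circleProj (F x)

/-- The anticlockwise distance `d₊(x,y) = min {r ≥ 0 : π(x' + r) = y}` (`x'` any lift of `x`). -/
def dPlus (x y : UnitAddCircle) : ℝ :=
  sInf {r : ℝ | 0 ≤ r ∧ ∃ x' : ℝ, circleProj x' = x ∧ circleProj (x' + r) = y}

/-- An invertible random dynamical system on the circle, in discrete or continuous time,
driven by a stationary memoryless noise process. -/
structure RDS (Ω : Type) [m : MeasurableSpace Ω] where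
  /-- the time set `𝕋⁺`: either `ℕ ∪ {0}` or `[0,∞)`, viewed inside `ℝ` -/
  T : Set ℝ
  T_cases : T = Set.range (fun n : ℕ => (n : ℝ)) ∨ T = Set.Ici (0 : ℝ)
  /-- the filtration -/
  F : ℝ → MeasurableSpace Ω
  F_le : ∀ t ∈ T, F t ≤ m
  F_mono : ∀ s ∈ T, ∀ t ∈ T, s ≤ t → F s ≤ F t
  /-- the probability measure -/
  P : Measure Ω
  P_prob : IsProbabilityMeasure P
  /-- the time-shift maps on the noise space -/
  θ : ℝ → Ω → Ω
  θ_zero : θ 0 = id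
  θ_add : ∀ s ∈ T, ∀ t ∈ T, θ (s + t) = θ t ∘ θ s
  θ_preserving : ∀ t ∈ T, MeasurePreserving (θ t) P P
  θ_adapted : ∀ s ∈ T, ∀ t ∈ T, @Measurable Ω Ω (F (s + t)) (F s) (θ t)
  θ_indep : ∀ t ∈ T, ∀ E A : Set Ω, MeasurableSet[F t] E →
    MeasurableSet[⨆ s ∈ T, F s] A → P (E ∩ θ t ⁻¹' A) = P E * P A
  /-- the random homeomorphisms -/
  φ : ℝ → Ω → UnitAddCircle ≃ₜ UnitAddCircle
  φ_orient : ∀ t ∈ T, ∀ ω, OrientPreserving (φ t ω)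
  φ_meas : ∀ t ∈ T, @Measurable (Ω × UnitAddCircle) UnitAddCircle
    ((F t).prod inferInstance) inferInstance (fun p => φ t p.1 p.2)
  φ_zero : ∀ ω, φ 0 ω = Homeomorph.refl UnitAddCircle
  φ_cocycle : ∀ s ∈ T, ∀ t ∈ T, ∀ ω x, φ (s + t) ω x = φ t (θ s ω) (φ s ω x)
  φ_cadlag_right : ∀ ω, ∀ t ∈ T, ∀ tn : ℕ → ℝ, (∀ n, tn n ∈ T) → Antitone tn →
    Tendsto tn atTop (𝓝 t) → ∀ (xn : ℕ → UnitAddCircle) (x : UnitAddCircle),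
      Tendsto xn atTop (𝓝 x) →
      Tendsto (fun n => φ (tn n) ω (xn n)) atTop (𝓝 (φ t ω x))
  /-- the left-limit maps -/
  φ_left_lim : ℝ → Ω → UnitAddCircle → UnitAddCircle
  φ_cadlag_left : ∀ ω, ∀ t ∈ T, ∀ tn : ℕ → ℝ, (∀ n, tn n ∈ T) → StrictMono tn →
    Tendsto tn atTop (𝓝 t) → ∀ (xn : ℕ → UnitAddCircle) (x : UnitAddCircle),
      Tendsto xn atTop (𝓝 x) →
      Tendsto (fun n => φ (tn n) ω (xn n)) atTop (𝓝 (φ_left_lim t ω x))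

/-- A probability measure on the circle is atomless if every singleton is null. -/
def Atomless (ρ : Measure UnitAddCircle) : Prop := ∀ x, ρ {x} = 0

/-- A measure on the circle has full support. -/
def FullSupport (ρ : Measure UnitAddCircle) : Prop :=
  ∀ U : Set UnitAddCircle, IsOpen U → U.Nonempty → 0 < ρ U

/-- The (topological) support of a measure on the circle. -/
def msupport (ρ : Measure UnitAddCircle) : Set UnitAddCircle :=
  {x | ∀ U : Set UnitAddCircle, IsOpen U → x ∈ U → 0 < ρ U}

namespace RDS

variable {Ω : Type} [m : MeasurableSpace Ω] (S : RDS Ω)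

/-- the future σ-algebra `𝓕₊ = σ(𝓕_t : t ∈ 𝕋⁺)`. -/
def Fplus : MeasurableSpace Ω := ⨆ t ∈ S.T, S.F t

/-- The filter "t → ∞ along the time set 𝕋⁺". -/
def tFilter : Filter ℝ := atTop ⊓ 𝓟 S.T

/-- two-point contractibility. -/
def Contractible : Prop := ∀ x y : UnitAddCircle, x ≠ y →
  0 < S.P {ω | ∃ t ∈ S.T, dist (S.φ t ω x) (S.φ t ω y) < dist x y}

/-- compressibility. -/
def Compressible : Prop := ∀ x y : UnitAddCircle, x ≠ y →
  0 < S.P {ω | ∃ t ∈ S.T, dPlus (S.φ t ω x) (S.φ t ω y) < dPlus x y}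

/-- `p` is a deterministic fixed point. -/
def DetFixedPoint (p : UnitAddCircle) : Prop :=
  ∀ᵐ ω ∂S.P, ∀ t ∈ S.T, S.φ t ω p = p

/-- `A` is forward-invariant. -/
def ForwardInvariant (A : Set UnitAddCircle) : Prop :=
  ∀ᵐ ω ∂S.P, ∀ t ∈ S.T, ⇑(S.φ t ω) '' A ⊆ A

/-- reverse-minimal dynamics: the only open forward-invariant sets are `∅` and `𝕊¹`. -/
def ReverseMinimal : Prop :=
  ∀ A : Set UnitAddCircle, IsOpen A → S.ForwardInvariant A → A = ∅ ∨ A = Set.univ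

/-- synchronisation. -/
def Synchronising : Prop := ∀ x y : UnitAddCircle,
  S.P {ω | Tendsto (fun t => dist (S.φ t ω x) (S.φ t ω y)) S.tFilter (𝓝 0)} = 1

/-- everywhere local stability. -/
def EverywhereLocallyStable : Prop := ∀ x : UnitAddCircle,
  S.P {ω | ∃ U : Set UnitAddCircle, IsOpen U ∧ x ∈ U ∧
    Tendsto (fun t => volume (⇑(S.φ t ω) '' U)) S.tFilter (𝓝 0)} = 1

/-- stable synchronisation. -/
def StablySynchronising : Prop := S.Synchronising ∧ S.EverywhereLocallyStable

/-- `ρ` is reverse-stationary: `ρ(A) = ∫ ρ(φ(t,ω)A) ℙ(dω)` for all `t ∈ 𝕋⁺`, Borel `A`. -/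
def ReverseStationary (ρ : Measure UnitAddCircle) : Prop :=
  ∀ t ∈ S.T, ∀ A : Set UnitAddCircle, MeasurableSet A →
    ρ A = ∫⁻ ω, ρ (⇑(S.φ t ω) '' A) ∂S.P

/-- `r` is a crack point of `ω`. -/
def CrackPoint (ω : Ω) (r : UnitAddCircle) : Prop :=
  ∀ G : Set UnitAddCircle, IsClosed G → r ∉ G →
    Tendsto (fun t => volume (⇑(S.φ t ω) '' G)) S.tFilter (𝓝 0)

/-- the set of contractive sample points. -/
def Ωc : Set Ω := {ω | ∃ r, S.CrackPoint ω r}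

/-- the reverse transition probabilities `φ̄ₓᵗ(A) = ℙ(ω : φ(t,ω)⁻¹(x) ∈ A)`. -/
def revTrans (t : ℝ) (x : UnitAddCircle) (A : Set UnitAddCircle) : ℝ≥0∞ :=
  S.P {ω | (S.φ t ω).symm x ∈ A}

/-- the forward transition probabilities `φₓᵗ(A) = ℙ(ω : φ(t,ω)x ∈ A)`. -/
def fwdTrans (t : ℝ) (x : UnitAddCircle) (A : Set UnitAddCircle) : ℝ≥0∞ :=
  S.P {ω | S.φ t ω x ∈ A}

/-- `ρ` is stationary for a transition family `ν`. -/
def StationaryFor (ν : ℝ → UnitAddCircle → Set UnitAddCircle → ℝ≥0∞)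
    (ρ : Measure UnitAddCircle) : Prop :=
  ∀ t ∈ S.T, ∀ A : Set UnitAddCircle, MeasurableSet A → ρ A = ∫⁻ x, ν t x A ∂ρ

/-- `ρ` is ergodic for a transition family `ν`. -/
def ErgodicFor (ν : ℝ → UnitAddCircle → Set UnitAddCircle → ℝ≥0∞)
    (ρ : Measure UnitAddCircle) : Prop :=
  S.StationaryFor ν ρ ∧ ∀ A : Set UnitAddCircle, MeasurableSet A →
    (∀ t ∈ S.T, ∀ᵐ x ∂ρ, x ∈ A → ν t x A = 1) → ρ A = 0 ∨ ρ A = 1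

end RDS

/-!
Reverse-stationarity says that the `ρ`-mass of an arc, carried along by the flow, has constant
mean. Hence, if `j` is the mass of one of the two arcs between a pair of points, the mean of
`j (1 - j)` decreases along the two-point motion, and the decrease is exactly the variance of `j`.
If some pair of distinct points suffered no decrease at all times, then its motion would never
leave a compact set of such pairs, and a closest pair in that set would contradict contractibility.
By compactness the decrease is therefore bounded below on `{j (1 - j) ≥ ε}`, and since the means
converge, `j (1 - j)` is small with high probability at some time. From then on one of the two arcs
has small mass, and the maximal inequality for the nonnegative supermartingale given by its mass
keeps it small forever. So one of the two masses tends to zero almost surely, and since `ρ` has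
full support and the circle is compact, so does the length of that arc.
-/

section MeasureOfSections

variable {X Y : Type*} [TopologicalSpace X] [TopologicalSpace Y] [MeasurableSpace Y]

theorem lowerSemicontinuous_measure_preimage_prodMk (ρ : Measure Y) [ρ.Regular]
    {U : Set (X × Y)} (hU : IsOpen U) : LowerSemicontinuous fun x ↦ ρ (Prod.mk x ⁻¹' U) := by
  intro x r hr
  obtain ⟨K, hKU, hK, hrK⟩ := (hU.preimage (.prodMk_right x)).exists_lt_isCompact hr
  obtain ⟨V, W, hV, -, hxV, hKW, hVWU⟩ := generalized_tube_lemma isCompact_singleton hK hU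
    (by rintro ⟨x', y⟩ ⟨rfl, hy⟩; exact hKU hy)
  filter_upwards [hV.mem_nhds (hxV rfl)] with x' hx'
  exact hrK.trans_le (measure_mono fun y hy ↦ hVWU ⟨hx', hKW hy⟩)

theorem exists_forall_le_measure_ball {X : Type*} [PseudoMetricSpace X] [CompactSpace X]
    [MeasurableSpace X] (ρ : Measure X) [ρ.Regular] [ρ.IsOpenPosMeasure] {s : ℝ} (hs : 0 < s) :
    ∃ δ > 0, ∀ x, δ ≤ ρ (Metric.ball x s) := by
  cases isEmpty_or_nonempty X with
  | inl _ => exact ⟨1, one_pos, isEmptyElim⟩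
  | inr _ =>
    have hlsc : LowerSemicontinuous fun x ↦ ρ (Metric.ball x s) :=
      lowerSemicontinuous_measure_preimage_prodMk ρ (U := {p : X × X | dist p.2 p.1 < s})
        (isOpen_lt (by fun_prop) continuous_const)
    obtain ⟨x₀, -, hx₀⟩ := (hlsc.lowerSemicontinuousOn univ).exists_isMinOn univ_nonempty
      isCompact_univ
    exact ⟨_, Metric.measure_ball_pos ρ x₀ hs, fun x ↦ hx₀ (mem_univ x)⟩

end MeasureOfSections

section CircularOrder

theorem sbtw_of_sbtw_of_sbtw {α : Type*} [CircularPreorder α] {a b c d : α}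
    (hacb : sbtw a c b) (hbda : sbtw b d a) : sbtw d a c :=
  (hacb.cyclic_left.trans_left hbda).cyclic_left

theorem mem_cIoo_and_mem_cIoo_comm {α : Type*} [CircularPreorder α] {a b c d : α} :
    c ∈ cIoo a b ∧ d ∈ cIoo b a ↔ a ∈ cIoo d c ∧ b ∈ cIoo c d :=
  ⟨fun ⟨hc, hd⟩ ↦ ⟨sbtw_of_sbtw_of_sbtw hc hd, sbtw_of_sbtw_of_sbtw hd hc⟩,
    fun ⟨ha, hb⟩ ↦ ⟨sbtw_of_sbtw_of_sbtw hb ha, sbtw_of_sbtw_of_sbtw ha hb⟩⟩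

variable {α β : Type*} [CircularOrder α] [CircularOrder β]

theorem cIoo_self (a : α) : cIoo a a = ∅ :=
  eq_empty_of_forall_notMem fun _ ↦ sbtw_irrefl_left_right

theorem cIcc_eq_insert_insert_cIoo {a b : α} (hab : a ≠ b) :
    cIcc a b = insert a (insert b (cIoo a b)) := by
  ext c
  simp only [mem_cIcc, mem_insert_iff, mem_cIoo]
  constructor
  · intro hacb
    by_cases hbca : btw b c a
    · rcases hacb.antisymm hbca with rfl | rfl | rfl
      · exact .inl rfl
      · exact .inr (.inl rfl)
      · exact absurd rfl hab
    · exact .inr (.inr (hacb.sbtw_of_not_btw hbca))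
  · rintro (rfl | rfl | hacb)
    exacts [btw_rfl_left, btw_rfl_right, hacb.btw]

theorem sbtw_apply_iff_of_forall_sbtw {f : α → β}
    (hmono : ∀ ⦃a b c⦄, sbtw a b c → sbtw (f a) (f b) (f c)) {a b c : α} :
    sbtw (f a) (f b) (f c) ↔ sbtw a b c := by
  refine ⟨fun h ↦ ?_, fun h ↦ hmono h⟩
  by_contra hnot
  have hcba : btw c b a := btw_iff_not_sbtw.2 hnot
  by_cases habc : btw a b c
  · have hne : a ≠ b ∧ b ≠ c ∧ c ≠ a := by
      refine ⟨?_, ?_, ?_⟩ <;> rintro rfl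
      exacts [sbtw_irrefl_left h, sbtw_irrefl_right h, sbtw_irrefl_left_right h]
    rcases habc.antisymm hcba with hab | hbc | hca
    exacts [hne.1 hab, hne.2.1 hbc, hne.2.2 hca]
  · exact h.not_sbtw (hmono (hcba.sbtw_of_not_btw habc))

end CircularOrder

section AddCircleArc

theorem norm_coe_le_abs {p : ℝ} (x : ℝ) : ‖(x : AddCircle p)‖ ≤ |x| :=
  QuotientAddGroup.norm_mk_le_norm (m := x)

theorem ball_coe_eq_image {p : ℝ} (a r : ℝ) :
    Metric.ball (a : AddCircle p) r = (↑) '' Metric.ball a r := by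
  ext z
  simp only [Metric.mem_ball, mem_image, dist_eq_norm]
  constructor
  · intro hz
    obtain ⟨c, hc, hcr⟩ := QuotientAddGroup.norm_lt_iff.1 hz
    exact ⟨c + a, by simpa using hcr, by rw [AddCircle.coe_add, hc, sub_add_cancel]⟩
  · rintro ⟨c, hc, rfl⟩
    exact (norm_coe_le_abs (c - a)).trans_lt hc

variable {p : ℝ} [hp : Fact (0 < p)]

theorem coe_toIocMod (a b : ℝ) : ((toIocMod hp.out a b : ℝ) : AddCircle p) = b := by
  rw [← self_sub_toIocDiv_zsmul, AddCircle.coe_sub, AddCircle.coe_zsmul, AddCircle.coe_period,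
    smul_zero, sub_zero]

theorem coe_mem_cIoo_coe_iff {a b c : ℝ} :
    (c : AddCircle p) ∈ cIoo (a : AddCircle p) b ↔ toIocMod hp.out a c < toIcoMod hp.out a b := by
  rw [mem_cIoo, sbtw_iff_not_btw, btw_cyclic]
  exact QuotientAddGroup.btw_coe_iff.not.trans not_le

theorem cIoo_coe {a b : ℝ} (hab : a ≤ b) (hba : b < a + p) :
    cIoo (a : AddCircle p) b = (↑) '' Ioo a b := by
  have hb : toIcoMod hp.out a b = b := (toIcoMod_eq_self _).2 ⟨hab, hba⟩
  refine Subset.antisymm (fun z hz ↦ ?_) (image_subset_iff.2 fun c hc ↦ ?_)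
  · obtain ⟨c, rfl⟩ := QuotientAddGroup.mk_surjective z
    exact ⟨_, ⟨left_lt_toIocMod _ _ _, (coe_mem_cIoo_coe_iff.1 hz).trans_eq hb⟩, coe_toIocMod a c⟩
  · have hc' : toIocMod hp.out a c = c := (toIocMod_eq_self _).2 ⟨hc.1, (hc.2.trans hba).le⟩
    rw [mem_preimage, coe_mem_cIoo_coe_iff, hb, hc']
    exact hc.2

theorem exists_coe_eq_and_coe_eq (x y : AddCircle p) :
    ∃ a b : ℝ, a ≤ b ∧ b < a + p ∧ (a : AddCircle p) = x ∧ (b : AddCircle p) = y := by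
  obtain ⟨a, rfl⟩ := QuotientAddGroup.mk_surjective x
  let b := AddCircle.equivIco p a y
  exact ⟨a, b, b.2.1, b.2.2, rfl, AddCircle.coe_equivIco⟩

theorem sbtw_iff_exists_coe {x y z : AddCircle p} : sbtw x y z ↔
    ∃ a b c : ℝ, (a < b ∧ b < c ∧ c < a + p) ∧
      (a : AddCircle p) = x ∧ (b : AddCircle p) = y ∧ (c : AddCircle p) = z := by
  constructor
  · obtain ⟨a, c, hac, hca, rfl, rfl⟩ := exists_coe_eq_and_coe_eq x z
    intro h
    rw [← mem_cIoo, cIoo_coe hac hca] at h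
    obtain ⟨b, hb, rfl⟩ := h
    exact ⟨a, b, c, ⟨hb.1, hb.2, hca⟩, rfl, rfl, rfl⟩
  · rintro ⟨a, b, c, ⟨hab, hbc, hca⟩, rfl, rfl, rfl⟩
    rw [← mem_cIoo, cIoo_coe (hab.trans hbc).le hca]
    exact mem_image_of_mem _ ⟨hab, hbc⟩

theorem isOpen_setOf_sbtw :
    IsOpen {q : AddCircle p × AddCircle p × AddCircle p | sbtw q.1 q.2.1 q.2.2} := by
  have hopen : IsOpenMap ((↑) : ℝ → AddCircle p) := QuotientAddGroup.isOpenMap_coe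
  have hlt : IsOpen {q : ℝ × ℝ × ℝ | q.1 < q.2.1 ∧ q.2.1 < q.2.2 ∧ q.2.2 < q.1 + p} :=
    (isOpen_lt continuous_fst (by fun_prop)).and <|
      (isOpen_lt (by fun_prop) (by fun_prop)).and (isOpen_lt (by fun_prop) (by fun_prop))
  convert hopen.prodMap (hopen.prodMap hopen) _ hlt using 1
  ext ⟨x, y, z⟩
  simp only [mem_ofPred_eq, sbtw_iff_exists_coe, mem_image, Prod.exists, Prod.map_apply,
    Prod.mk.injEq]

theorem isOpen_cIoo (x y : AddCircle p) : IsOpen (cIoo x y) :=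
  isOpen_setOf_sbtw.preimage (f := fun z ↦ (x, z, y)) (by fun_prop)

theorem cIoo_coe_sub_coe_add (a : ℝ) {r : ℝ} (hr : 0 ≤ r) (hrp : 2 * r < p) :
    cIoo ((a - r : ℝ) : AddCircle p) (a + r : ℝ) = Metric.ball ↑a r := by
  rw [cIoo_coe (by linarith) (by linarith), ball_coe_eq_image, Real.ball_eq_Ioo]

theorem exists_cIoo_subset_of_isOpen {U : Set (AddCircle p)} (hU : IsOpen U) {x : AddCircle p}
    (hx : x ∈ U) : ∃ y z, x ∈ cIoo y z ∧ cIoo y z ⊆ U := by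
  obtain ⟨a, -, -, -, rfl, -⟩ := exists_coe_eq_and_coe_eq x x
  obtain ⟨r, hr, hrU⟩ := Metric.isOpen_iff.1 hU a hx
  have hp : 0 < p := Fact.out
  have hs : 0 < min r (p / 3) := by positivity
  refine ⟨(a - min r (p / 3) : ℝ), (a + min r (p / 3) : ℝ), ?_⟩
  rw [cIoo_coe_sub_coe_add a hs.le (by linarith [min_le_right r (p / 3)])]
  exact ⟨Metric.mem_ball_self hs, (Metric.ball_subset_ball (min_le_left _ _)).trans hrU⟩

theorem exists_cIoo_eq_ball (x y : AddCircle p) :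
    ∃ (m : AddCircle p) (r : ℝ), cIoo x y = Metric.ball m r ∧ dist x y ≤ 2 * r := by
  obtain ⟨a, b, hab, hba, rfl, rfl⟩ := exists_coe_eq_and_coe_eq x y
  refine ⟨((a + b) / 2 : ℝ), (b - a) / 2, ?_, ?_⟩
  · rw [← cIoo_coe_sub_coe_add _ (by linarith) (by linarith)]
    congr 2 <;> ring
  · rw [dist_comm, dist_eq_norm, ← AddCircle.coe_sub]
    refine (norm_coe_le_abs (b - a)).trans ?_
    rw [abs_of_nonneg (sub_nonneg.2 hab)]
    linarith

end AddCircleArc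

/-- The `ρ`-mass of the open arc running anticlockwise from the first to the second point of a
pair. It vanishes on the diagonal, since Mathlib's `cIoo x x` is empty. -/
def arcMass {α : Type*} [CircularPreorder α] [MeasurableSpace α] (ρ : Measure α) (z : α × α) :
    ℝ≥0∞ :=
  ρ (cIoo z.1 z.2)

/-- The product of the `ρ`-masses of the two open arcs between the points of a pair. It serves as
a Lyapunov function for the motion of pairs of points. -/
def arcLyapunov {α : Type*} [CircularPreorder α] [MeasurableSpace α] (ρ : Measure α) (z : α × α) :
    ℝ :=
  (arcMass ρ z).toReal * (arcMass ρ z.swap).toReal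

section ArcMass

variable {p : ℝ} [Fact (0 < p)]

theorem eventually_mem_cIoo_iff {c d x : AddCircle p} (hc : x ≠ c) (hd : x ≠ d) :
    ∀ᶠ x' in 𝓝 x, x' ∈ cIoo c d ↔ x ∈ cIoo c d := by
  rcases eq_or_ne c d with rfl | hcd
  · simp only [cIoo_self, mem_empty_iff_false, iff_self, eventually_true]
  by_cases hx : x ∈ cIoo c d
  · filter_upwards [(isOpen_cIoo c d).mem_nhds hx] with x' hx'
    exact iff_of_true hx' hx
  · have hxdc : x ∈ cIoo d c := by
      rw [← mem_compl_iff, compl_cIoo, cIcc_eq_insert_insert_cIoo hcd.symm] at hx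
      exact (hx.resolve_left hd).resolve_left hc
    filter_upwards [(isOpen_cIoo d c).mem_nhds hxdc] with x' hx'
    exact iff_of_false (sbtw_asymm (mem_cIoo.1 hx')) hx

variable (ρ : Measure (AddCircle p))

theorem arcMass_self (x : AddCircle p) : arcMass ρ (x, x) = 0 := by
  rw [arcMass, cIoo_self, measure_empty]

theorem arcLyapunov_eq_zero {z : AddCircle p × AddCircle p} (hz : z.1 = z.2) :
    arcLyapunov ρ z = 0 := by
  obtain ⟨x, y⟩ := z
  obtain rfl : x = y := hz
  rw [arcLyapunov, arcMass_self, toReal_zero, zero_mul]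

theorem exists_mem_cIoo_arcMass_lt [IsFiniteMeasure ρ] [NullSingletonClass ρ] (x : AddCircle p)
    {ε : ℝ≥0∞} (hε : 0 < ε) : ∃ y z, x ∈ cIoo y z ∧ arcMass ρ (y, z) < ε := by
  obtain ⟨U, hxU, hU, hUε⟩ := Set.exists_isOpen_lt_of_lt {x} ε
    ((measure_singleton x).trans_lt hε : ρ {x} < ε)
  obtain ⟨y, z, hx, hyz⟩ := exists_cIoo_subset_of_isOpen hU (hxU rfl)
  exact ⟨y, z, hx, (measure_mono hyz).trans_lt hUε⟩

theorem lowerSemicontinuous_arcMass [ρ.Regular] : LowerSemicontinuous (arcMass ρ) :=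
  lowerSemicontinuous_measure_preimage_prodMk ρ
    (isOpen_setOf_sbtw.preimage (f := fun q : (AddCircle p × AddCircle p) × AddCircle p ↦
      (q.1.1, q.2, q.1.2)) (by fun_prop))

theorem measurable_arcMass [ρ.Regular] : Measurable (arcMass ρ) :=
  (lowerSemicontinuous_arcMass ρ).measurable

theorem exists_pos_forall_arcMass_lt_imp [ρ.Regular] [ρ.IsOpenPosMeasure] {s : ℝ} (hs : 0 < s) :
    ∃ δ > 0, ∀ z, arcMass ρ z < δ →
      dist z.1 z.2 ≤ 2 * s ∧ volume (cIoo z.1 z.2) ≤ ENNReal.ofReal (2 * s) := by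
  obtain ⟨δ, hδ, hball⟩ := exists_forall_le_measure_ball ρ hs
  refine ⟨δ, hδ, fun z hz ↦ ?_⟩
  obtain ⟨m, r, harc, hdist⟩ := exists_cIoo_eq_ball z.1 z.2
  have hrs : r ≤ s := by
    by_contra! hsr
    refine hz.not_ge ((hball m).trans ?_)
    rw [arcMass, harc]
    exact measure_mono (Metric.ball_subset_ball hsr.le)
  refine ⟨hdist.trans (by linarith), ?_⟩
  calc volume (cIoo z.1 z.2) ≤ volume (Metric.closedBall m s) := by
        rw [harc]
        exact measure_mono
          (Metric.ball_subset_closedBall.trans (Metric.closedBall_subset_closedBall hrs))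
    _ ≤ ENNReal.ofReal (2 * s) := by
        rw [AddCircle.volume_closedBall]
        exact ENNReal.ofReal_le_ofReal (min_le_right _ _)

section Tendsto

variable {ι : Type*} {l : Filter ι} {z : ι → AddCircle p × AddCircle p} [ρ.Regular]
  [ρ.IsOpenPosMeasure]

theorem tendsto_dist_of_tendsto_arcMass (h : Tendsto (fun i ↦ arcMass ρ (z i)) l (𝓝 0)) :
    Tendsto (fun i ↦ dist (z i).1 (z i).2) l (𝓝 0) := by
  refine Metric.tendsto_nhds.2 fun ε hε ↦ ?_
  obtain ⟨δ, hδ, hsmall⟩ := exists_pos_forall_arcMass_lt_imp ρ (by linarith : 0 < ε / 4)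
  filter_upwards [h.eventually_lt_const hδ] with i hi
  rw [Real.dist_0_eq_abs, abs_of_nonneg dist_nonneg]
  linarith [(hsmall _ hi).1]

theorem tendsto_volume_of_tendsto_arcMass (h : Tendsto (fun i ↦ arcMass ρ (z i)) l (𝓝 0)) :
    Tendsto (fun i ↦ volume (cIoo (z i).1 (z i).2)) l (𝓝 0) := by
  refine ENNReal.tendsto_nhds_zero.2 fun ε hε ↦ ?_
  obtain ⟨s, hs, hsε⟩ : ∃ s : ℝ, 0 < s ∧ ENNReal.ofReal (2 * s) ≤ ε := by
    obtain ⟨r, hr, hrε⟩ := ENNReal.lt_iff_exists_nnreal_btwn.1 hε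
    refine ⟨r / 2, by simpa using hr, ?_⟩
    rw [mul_div_cancel₀ _ two_ne_zero, ENNReal.ofReal_coe_nnreal]
    exact hrε.le
  obtain ⟨δ, hδ, hsmall⟩ := exists_pos_forall_arcMass_lt_imp ρ hs
  filter_upwards [h.eventually_lt_const hδ] with i hi using (hsmall _ hi).2.trans hsε

end Tendsto

theorem arcLyapunov_nonneg (z : AddCircle p × AddCircle p) : 0 ≤ arcLyapunov ρ z :=
  mul_nonneg toReal_nonneg toReal_nonneg

section IsFiniteMeasure

variable [IsFiniteMeasure ρ]

theorem arcMass_ne_top (z : AddCircle p × AddCircle p) : arcMass ρ z ≠ ∞ := measure_ne_top _ _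

theorem arcLyapunov_eq_prod (z : AddCircle p × AddCircle p) :
    arcLyapunov ρ z = (ρ.prod ρ).real {q | z.1 ∈ cIoo q.2 q.1 ∧ z.2 ∈ cIoo q.1 q.2} := by
  have hset : {q : AddCircle p × AddCircle p | z.1 ∈ cIoo q.2 q.1 ∧ z.2 ∈ cIoo q.1 q.2} =
      cIoo z.1 z.2 ×ˢ cIoo z.2 z.1 :=
    Set.ext fun _ ↦ mem_cIoo_and_mem_cIoo_comm.symm
  rw [hset, measureReal_prod_prod]
  rfl

theorem continuous_arcLyapunov [NullSingletonClass ρ] : Continuous (arcLyapunov ρ) := by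
  refine continuous_iff_continuousAt.2 fun z ↦ ?_
  simp only [ContinuousAt, funext (arcLyapunov_eq_prod ρ)]
  have hmeas (w : AddCircle p × AddCircle p) :
      MeasurableSet {q : AddCircle p × AddCircle p | w.1 ∈ cIoo q.2 q.1 ∧ w.2 ∈ cIoo q.1 q.2} :=
    ((isOpen_setOf_sbtw.preimage (f := fun q : AddCircle p × AddCircle p ↦ (q.2, w.1, q.1))
      (by fun_prop)).inter (isOpen_setOf_sbtw.preimage
      (f := fun q : AddCircle p × AddCircle p ↦ (q.1, w.2, q.2)) (by fun_prop))).measurableSet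
  have hne (x : AddCircle p) : ∀ᵐ c ∂ρ, x ≠ c := (Measure.ae_ne ρ x).mono fun _ ↦ Ne.symm
  have hfst (x : AddCircle p) : ∀ᵐ q ∂ρ.prod ρ, x ≠ q.1 :=
    Measure.quasiMeasurePreserving_fst.ae (hne x)
  have hsnd (x : AddCircle p) : ∀ᵐ q ∂ρ.prod ρ, x ≠ q.2 :=
    Measure.quasiMeasurePreserving_snd.ae (hne x)
  refine (ENNReal.tendsto_toReal (measure_ne_top _ _)).comp
    (tendsto_measure_of_ae_tendsto_indicator_of_isFiniteMeasure _ (hmeas z) hmeas ?_)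
  filter_upwards [hfst z.1, hfst z.2, hsnd z.1, hsnd z.2] with q h₁₁ h₂₁ h₁₂ h₂₂
  filter_upwards [continuous_fst.continuousAt.eventually (eventually_mem_cIoo_iff h₁₂ h₁₁),
    continuous_snd.continuousAt.eventually (eventually_mem_cIoo_iff h₂₁ h₂₂)] with w hw₁ hw₂
  exact and_congr hw₁ hw₂

end IsFiniteMeasure

variable [IsProbabilityMeasure ρ]

theorem toReal_arcMass_le_one (z : AddCircle p × AddCircle p) : (arcMass ρ z).toReal ≤ 1 :=
  measureReal_le_one

theorem arcMass_add_arcMass_swap [NullSingletonClass ρ] {z : AddCircle p × AddCircle p}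
    (hz : z.1 ≠ z.2) :
    arcMass ρ z + arcMass ρ z.swap = 1 := by
  have hcIcc : ρ (cIcc z.2 z.1) = arcMass ρ z.swap := by
    rw [cIcc_eq_insert_insert_cIoo hz.symm, measure_congr (insert_ae_eq_self _ _),
      measure_congr (insert_ae_eq_self _ _)]
    rfl
  rw [← hcIcc, ← compl_cIoo]
  exact prob_add_prob_compl (isOpen_cIoo _ _).measurableSet

theorem toReal_arcMass_add_toReal_arcMass_swap [NullSingletonClass ρ]
    {z : AddCircle p × AddCircle p} (hz : z.1 ≠ z.2) :
    (arcMass ρ z).toReal + (arcMass ρ z.swap).toReal = 1 := by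
  rw [← toReal_add (arcMass_ne_top ρ _) (arcMass_ne_top ρ _), arcMass_add_arcMass_swap ρ hz,
    toReal_one]

theorem arcLyapunov_eq_sub_sq [NullSingletonClass ρ] {z : AddCircle p × AddCircle p}
    (hz : z.1 ≠ z.2) : arcLyapunov ρ z = (arcMass ρ z).toReal - (arcMass ρ z).toReal ^ 2 := by
  rw [arcLyapunov, eq_sub_of_add_eq' (toReal_arcMass_add_toReal_arcMass_swap ρ hz)]
  ring

theorem arcMass_le_or_arcMass_swap_le [NullSingletonClass ρ] {z : AddCircle p × AddCircle p}
    (hz : z.1 ≠ z.2) {η : ℝ} (hη : arcLyapunov ρ z < η / 2) :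
    arcMass ρ z ≤ ENNReal.ofReal η ∨ arcMass ρ z.swap ≤ ENNReal.ofReal η := by
  have hadd := toReal_arcMass_add_toReal_arcMass_swap ρ hz
  have hreal : (arcMass ρ z).toReal ≤ η ∨ (arcMass ρ z.swap).toReal ≤ η := by
    have h₁ : 0 ≤ (arcMass ρ z).toReal := toReal_nonneg
    have h₂ : 0 ≤ (arcMass ρ z.swap).toReal := toReal_nonneg
    rw [arcLyapunov] at hη
    by_contra! hlt
    -- the larger of the two masses is at least `1 / 2`, so the smaller is less than `η`
    obtain ⟨hlt₁, hlt₂⟩ := hlt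
    nlinarith
  refine hreal.imp (fun h ↦ ?_) fun h ↦ ?_ <;>
  · rw [← ofReal_toReal (arcMass_ne_top ρ _)]
    exact ofReal_le_ofReal h

end ArcMass

section OrientPreserving

variable {f : UnitAddCircle ≃ₜ UnitAddCircle}

theorem OrientPreserving.sbtw_iff (hf : OrientPreserving f) {x y z : UnitAddCircle} :
    sbtw (f x) (f y) (f z) ↔ sbtw x y z := by
  refine sbtw_apply_iff_of_forall_sbtw fun x y z h ↦ ?_
  obtain ⟨F, hF, hF1, hfF⟩ := hf
  obtain ⟨a, b, c, ⟨hab, hbc, hca⟩, rfl, rfl, rfl⟩ := sbtw_iff_exists_coe.1 h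
  exact sbtw_iff_exists_coe.2 ⟨F a, F b, F c, ⟨hF hab, hF hbc, hF1 a ▸ hF hca⟩,
    (hfF a).symm, (hfF b).symm, (hfF c).symm⟩

theorem OrientPreserving.image_cIoo (hf : OrientPreserving f) (x y : UnitAddCircle) :
    f '' cIoo x y = cIoo (f x) (f y) := by
  ext z
  obtain ⟨z, rfl⟩ := f.surjective z
  rw [f.injective.mem_set_image]
  exact hf.sbtw_iff.symm

end OrientPreserving

theorem tendsto_zero_or_tendsto_zero {ι : Type*} {l : Filter ι} {f g : ι → ℝ≥0∞} {u : ℕ → ℝ≥0∞}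
    (hu : Tendsto u atTop (𝓝 0))
    (h : ∀ n, (∀ᶠ i in l, f i ≤ u n) ∨ ∀ᶠ i in l, g i ≤ u n) :
    Tendsto f l (𝓝 0) ∨ Tendsto g l (𝓝 0) := by
  have hlim {k : ι → ℝ≥0∞} (hk : ∃ᶠ n in atTop, ∀ᶠ i in l, k i ≤ u n) : Tendsto k l (𝓝 0) := by
    refine ENNReal.tendsto_nhds_zero.2 fun ε hε ↦ ?_
    obtain ⟨n, hn, hnε⟩ := (hk.and_eventually (hu.eventually_le_const hε)).exists
    exact hn.mono fun i hi ↦ hi.trans hnε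
  exact (frequently_or_distrib.1 (Frequently.of_forall h)).imp hlim hlim

theorem lintegral_comp_prodMk_of_indepFun {Ω α β : Type*} [MeasurableSpace Ω]
    [MeasurableSpace α] [MeasurableSpace β] {μ : Measure Ω} [IsFiniteMeasure μ] {X : Ω → α}
    {Y : Ω → β} (hX : Measurable X) (hY : Measurable Y)
    (hXY : ProbabilityTheory.IndepFun X Y μ) {H : α × β → ℝ≥0∞} (hH : Measurable H) :
    ∫⁻ ω, H (X ω, Y ω) ∂μ = ∫⁻ ω, ∫⁻ ω', H (X ω', Y ω) ∂μ ∂μ := by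
  calc ∫⁻ ω, H (X ω, Y ω) ∂μ = ∫⁻ q, H q ∂μ.map fun ω ↦ (X ω, Y ω) :=
        (lintegral_map hH (hX.prodMk hY)).symm
    _ = ∫⁻ y, ∫⁻ x, H (x, y) ∂μ.map X ∂μ.map Y := by
        rw [(ProbabilityTheory.indepFun_iff_map_prod_eq_prod_map_map hX.aemeasurable
          hY.aemeasurable).1 hXY, lintegral_prod_symm' _ hH]
    _ = ∫⁻ ω, ∫⁻ x, H (x, Y ω) ∂μ.map X ∂μ := lintegral_map hH.lintegral_prod_left' hY
    _ = ∫⁻ ω, ∫⁻ ω', H (X ω', Y ω) ∂μ ∂μ :=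
        lintegral_congr fun ω ↦ lintegral_map (hH.comp measurable_prodMk_right) hX

theorem measurable_prodMk_apply_apply {α β γ : Type*} [MeasurableSpace α] [MeasurableSpace β]
    [MeasurableSpace γ] {f : α → β → γ} (hf : Measurable fun q : α × β ↦ f q.1 q.2) :
    Measurable fun q : α × β × β ↦ (f q.1 q.2.1, f q.1 q.2.2) := by
  have hfst : Measurable fun q : α × β × β ↦ f q.1 q.2.1 :=
    hf.comp (measurable_fst.prodMk measurable_snd.fst)
  have hsnd : Measurable fun q : α × β × β ↦ f q.1 q.2.2 :=
    hf.comp (measurable_fst.prodMk measurable_snd.snd)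
  exact hfst.prodMk hsnd

namespace RDS

variable {Ω : Type} [m : MeasurableSpace Ω] (S : RDS Ω)

instance : IsProbabilityMeasure S.P := S.P_prob

theorem natCast_mem_T (n : ℕ) : (n : ℝ) ∈ S.T := by
  obtain h | h := S.T_cases <;> rw [h]
  exacts [⟨n, rfl⟩, mem_Ici.2 n.cast_nonneg]

theorem zero_mem_T : (0 : ℝ) ∈ S.T := by
  simpa only [Nat.cast_zero] using S.natCast_mem_T 0

theorem nonneg_of_mem_T {t : ℝ} (ht : t ∈ S.T) : 0 ≤ t := by
  obtain h | h := S.T_cases <;> rw [h] at ht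
  · obtain ⟨n, rfl⟩ := ht
    exact n.cast_nonneg
  · exact ht

theorem add_mem_T {s t : ℝ} (hs : s ∈ S.T) (ht : t ∈ S.T) : s + t ∈ S.T := by
  obtain h | h := S.T_cases <;> rw [h] at hs ht ⊢
  · obtain ⟨⟨a, rfl⟩, b, rfl⟩ := hs, ht
    exact ⟨a + b, Nat.cast_add a b⟩
  · exact mem_Ici.2 (add_nonneg (mem_Ici.1 hs) (mem_Ici.1 ht))

theorem sub_mem_T {s t : ℝ} (hs : s ∈ S.T) (ht : t ∈ S.T) (hst : s ≤ t) : t - s ∈ S.T := by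
  obtain h | h := S.T_cases <;> rw [h] at hs ht ⊢
  · obtain ⟨⟨a, rfl⟩, b, rfl⟩ := hs, ht
    exact ⟨b - a, Nat.cast_sub (Nat.cast_le.1 hst)⟩
  · exact mem_Ici.2 (sub_nonneg.2 hst)

theorem F_le_Fplus {t : ℝ} (ht : t ∈ S.T) : S.F t ≤ S.Fplus := le_iSup₂_of_le t ht le_rfl

theorem Fplus_le : S.Fplus ≤ m := iSup₂_le S.F_le

theorem mem_tFilter {s : ℝ} {A : Set ℝ} (hs : s ∈ S.T) (h : ∀ t ∈ S.T, s + t ∈ A) :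
    A ∈ S.tFilter := by
  rw [tFilter, mem_inf_principal]
  filter_upwards [eventually_ge_atTop s] with t hst ht
  simpa only [add_sub_cancel] using h _ (S.sub_mem_T hs ht hst)

/-- The rational times. They form a countable subset of the time set which meets every right
neighbourhood of every time, so they suffice to decide whether a right-continuous path ever visits
an open set. -/
def ratTimes : Set ℝ := S.T ∩ range ((↑) : ℚ → ℝ)

theorem countable_ratTimes : S.ratTimes.Countable := (countable_range _).mono inter_subset_right

theorem exists_antitone_tendsto_ratTimes {t : ℝ} (ht : t ∈ S.T) :
    ∃ u : ℕ → ℝ, Antitone u ∧ (∀ n, u n ∈ S.ratTimes) ∧ Tendsto u atTop (𝓝 t) := by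
  obtain h | h := S.T_cases
  · obtain ⟨n, rfl⟩ := h ▸ ht
    exact ⟨fun _ ↦ n, antitone_const, fun _ ↦ ⟨ht, n, Rat.cast_natCast n⟩, tendsto_const_nhds⟩
  · obtain ⟨u, hu, htu, hlim⟩ := Real.exists_seq_rat_strictAnti_tendsto t
    refine ⟨fun n ↦ u n, fun i j hij ↦ Rat.cast_le.2 (hu.antitone hij), fun n ↦ ⟨?_, u n, rfl⟩,
      hlim⟩
    rw [h] at ht ⊢
    exact (mem_Ici.1 ht).trans (htu n).le

section TwoPoint

/-- The two-point motion: the RDS acting diagonally on pairs of points. -/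
def twoPoint (t : ℝ) (ω : Ω) (z : UnitAddCircle × UnitAddCircle) :
    UnitAddCircle × UnitAddCircle :=
  (S.φ t ω z.1, S.φ t ω z.2)

theorem twoPoint_add {s t : ℝ} (hs : s ∈ S.T) (ht : t ∈ S.T) (ω : Ω)
    (z : UnitAddCircle × UnitAddCircle) :
    S.twoPoint (s + t) ω z = S.twoPoint t (S.θ s ω) (S.twoPoint s ω z) := by
  simp only [twoPoint, S.φ_cocycle s hs t ht]

theorem twoPoint_fst_ne_snd (t : ℝ) (ω : Ω) {z : UnitAddCircle × UnitAddCircle}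
    (hz : z.1 ≠ z.2) : (S.twoPoint t ω z).1 ≠ (S.twoPoint t ω z).2 :=
  (S.φ t ω).injective.ne hz

theorem continuous_twoPoint (t : ℝ) (ω : Ω) : Continuous (S.twoPoint t ω) :=
  (S.φ t ω).continuous.prodMap (S.φ t ω).continuous

theorem measurable_twoPoint_F {t : ℝ} (ht : t ∈ S.T) :
    Measurable[(S.F t).prod inferInstance]
      fun q : Ω × UnitAddCircle × UnitAddCircle ↦ S.twoPoint t q.1 q.2 :=
  @measurable_prodMk_apply_apply _ _ _ (S.F t) _ _ (fun ω x ↦ S.φ t ω x) (S.φ_meas t ht)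

theorem measurable_twoPoint_Fplus {t : ℝ} (ht : t ∈ S.T) :
    Measurable[S.Fplus.prod inferInstance]
      fun q : Ω × UnitAddCircle × UnitAddCircle ↦ S.twoPoint t q.1 q.2 :=
  (S.measurable_twoPoint_F ht).mono
    (sup_le_sup_right (MeasurableSpace.comap_mono (S.F_le_Fplus ht)) _) le_rfl

theorem measurable_twoPoint_apply_F {t : ℝ} (ht : t ∈ S.T)
    (z : UnitAddCircle × UnitAddCircle) : Measurable[S.F t] fun ω ↦ S.twoPoint t ω z :=
  (S.measurable_twoPoint_F ht).comp (@measurable_prodMk_right _ _ (S.F t) _ z)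

theorem measurable_twoPoint_apply {t : ℝ} (ht : t ∈ S.T) (z : UnitAddCircle × UnitAddCircle) :
    Measurable fun ω ↦ S.twoPoint t ω z :=
  (S.measurable_twoPoint_apply_F ht z).mono (S.F_le t ht) le_rfl

theorem exists_twoPoint_mem_iff_exists_ratTimes {U : Set (UnitAddCircle × UnitAddCircle)}
    (hU : IsOpen U) (ω : Ω) (z : UnitAddCircle × UnitAddCircle) :
    (∃ t ∈ S.T, S.twoPoint t ω z ∈ U) ↔ ∃ t ∈ S.ratTimes, S.twoPoint t ω z ∈ U := by
  refine ⟨fun ⟨t, ht, htU⟩ ↦ ?_, fun ⟨t, ht, htU⟩ ↦ ⟨t, ht.1, htU⟩⟩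
  obtain ⟨u, hu, huT, hut⟩ := S.exists_antitone_tendsto_ratTimes ht
  have hlim (x : UnitAddCircle) : Tendsto (fun n ↦ S.φ (u n) ω x) atTop (𝓝 (S.φ t ω x)) :=
    S.φ_cadlag_right ω t ht u (fun n ↦ (huT n).1) hu hut _ _ tendsto_const_nhds
  obtain ⟨n, hn⟩ :=
    (((hlim z.1).prodMk_nhds (hlim z.2)).eventually (hU.mem_nhds htU)).exists
  exact ⟨u n, huT n, hn⟩

end TwoPoint

section Markov

variable {s : ℝ} (hs : s ∈ S.T) (z : UnitAddCircle × UnitAddCircle)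
include hs

theorem indepFun_θ_twoPoint :
    @ProbabilityTheory.IndepFun _ _ _ m S.Fplus _ (S.θ s) (fun ω ↦ S.twoPoint s ω z) S.P := by
  have hθ := S.θ_preserving s hs
  refine ProbabilityTheory.IndepFun.symm ?_
  refine ProbabilityTheory.indepFun_iff_measure_inter_preimage_eq_mul.2 fun E A hE hA ↦ ?_
  rw [S.θ_indep s hs _ A (S.measurable_twoPoint_apply_F hs z hE) hA,
    hθ.measure_preimage (S.Fplus_le A hA).nullMeasurableSet]

theorem lintegral_comp_θ_twoPoint {H : Ω × UnitAddCircle × UnitAddCircle → ℝ≥0∞}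
    (hH : Measurable[S.Fplus.prod inferInstance] H) :
    ∫⁻ ω, H (S.θ s ω, S.twoPoint s ω z) ∂S.P =
      ∫⁻ ω, ∫⁻ ω', H (ω', S.twoPoint s ω z) ∂S.P ∂S.P := by
  have hθ := S.θ_preserving s hs
  rw [@lintegral_comp_prodMk_of_indepFun _ _ _ m S.Fplus _ _ _ _ _
    (hθ.measurable.mono le_rfl S.Fplus_le) (S.measurable_twoPoint_apply hs z)
    (S.indepFun_θ_twoPoint hs z) _ hH]
  refine lintegral_congr fun ω ↦
    hθ.lintegral_comp (f := fun ω' ↦ H (ω', S.twoPoint s ω z)) ?_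
  exact (hH.comp (@measurable_prodMk_right _ _ S.Fplus _ _)).mono S.Fplus_le le_rfl

theorem measure_θ_twoPoint_mem {Q : Set (Ω × UnitAddCircle × UnitAddCircle)}
    (hQ : MeasurableSet[S.Fplus.prod inferInstance] Q) :
    S.P {ω | (S.θ s ω, S.twoPoint s ω z) ∈ Q} =
      ∫⁻ ω, S.P {ω' | (ω', S.twoPoint s ω z) ∈ Q} ∂S.P := by
  have hpair : Measurable[m, S.Fplus.prod inferInstance]
      fun ω ↦ (S.θ s ω, S.twoPoint s ω z) :=
    @Measurable.prodMk _ m _ _ S.Fplus _ _ _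
      ((S.θ_preserving s hs).measurable.mono le_rfl S.Fplus_le) (S.measurable_twoPoint_apply hs z)
  have hsection (w : UnitAddCircle × UnitAddCircle) : MeasurableSet {ω' | (ω', w) ∈ Q} :=
    S.Fplus_le _ (@measurable_prodMk_right _ _ S.Fplus _ w Q hQ)
  have hind := S.lintegral_comp_θ_twoPoint hs z (Measurable.indicator (f := 1) measurable_const hQ)
  calc S.P {ω | (S.θ s ω, S.twoPoint s ω z) ∈ Q}
      = ∫⁻ ω, Q.indicator 1 (S.θ s ω, S.twoPoint s ω z) ∂S.P :=
        (lintegral_indicator_one (hpair hQ)).symm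
    _ = ∫⁻ ω, ∫⁻ ω', Q.indicator 1 (ω', S.twoPoint s ω z) ∂S.P ∂S.P := hind
    _ = ∫⁻ ω, S.P {ω' | (ω', S.twoPoint s ω z) ∈ Q} ∂S.P :=
        lintegral_congr fun ω ↦ lintegral_indicator_one (hsection _)

end Markov

section MaximalInequality

theorem mul_measure_θ_twoPoint_mem_le {s : ℝ} (hs : s ∈ S.T) (z : UnitAddCircle × UnitAddCircle)
    {Q : Set (Ω × UnitAddCircle × UnitAddCircle)}
    (hQ : MeasurableSet[S.Fplus.prod inferInstance] Q) {l : ℝ≥0∞}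
    {B : UnitAddCircle × UnitAddCircle → ℝ≥0∞} (hB : ∀ w, l * S.P {ω | (ω, w) ∈ Q} ≤ B w) :
    l * S.P {ω | (S.θ s ω, S.twoPoint s ω z) ∈ Q} ≤ ∫⁻ ω, B (S.twoPoint s ω z) ∂S.P := by
  rw [S.measure_θ_twoPoint_mem hs z hQ]
  exact (lintegral_const_mul_le _ _).trans (lintegral_mono fun ω ↦ hB _)

/-- A function on pairs of points is supermedian if its mean along the two-point motion never
exceeds its initial value, so that its values along the motion form a supermartingale. -/
def IsSupermedian (G : UnitAddCircle × UnitAddCircle → ℝ≥0∞) : Prop :=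
  ∀ t ∈ S.T, ∀ z, ∫⁻ ω, G (S.twoPoint t ω z) ∂S.P ≤ G z

variable {S} {G : UnitAddCircle × UnitAddCircle → ℝ≥0∞}

theorem measurableSet_setOf_exists_lt_twoPoint (hG : Measurable G) (l : ℝ≥0∞) {ι : Type*}
    {D : Set ι} (hD : D.Countable) {τ : ι → ℝ} (hτ : ∀ i ∈ D, τ i ∈ S.T) :
    MeasurableSet[S.Fplus.prod inferInstance]
      {q : Ω × UnitAddCircle × UnitAddCircle | ∃ i ∈ D, l < G (S.twoPoint (τ i) q.1 q.2)} := by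
  simp_rw [← exists_prop, ofPred_exists]
  exact MeasurableSet.biUnion hD fun i hi ↦
    (hG.comp (S.measurable_twoPoint_Fplus (hτ i hi))) measurableSet_Ioi

theorem IsSupermedian.mul_measure_exists_mem_finset_lt_le (hG : S.IsSupermedian G)
    (hGm : Measurable G) (l : ℝ≥0∞) {F : Finset ℝ} (hF : ∀ t ∈ F, t ∈ S.T) {a : ℝ} (ha : a ∈ S.T)
    (haF : ∀ t ∈ F, a ≤ t) (z : UnitAddCircle × UnitAddCircle) :
    l * S.P {ω | ∃ t ∈ F, l < G (S.twoPoint (t - a) ω z)} ≤ G z := by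
  induction F using Finset.induction_on_min generalizing a z with
  | empty => simp only [Finset.notMem_empty, false_and, exists_false, ofPred_false,
      measure_empty, mul_zero, zero_le]
  | insert b F hbF ih =>
    have hb : b ∈ S.T := hF b (F.mem_insert_self b)
    have hba : b - a ∈ S.T := S.sub_mem_T ha hb (haF b (F.mem_insert_self b))
    have hF' (t : ℝ) (ht : t ∈ F) : t ∈ S.T := hF t (Finset.mem_insert_of_mem ht)
    have hFb (t : ℝ) (ht : t ∈ F) : t - b ∈ S.T := S.sub_mem_T hb (hF' t ht) (hbF t ht).le
    set Q := {q : Ω × UnitAddCircle × UnitAddCircle | l < G q.2} ∪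
      {q | ∃ t ∈ (F : Set ℝ), l < G (S.twoPoint (t - b) q.1 q.2)} with hQ
    have hQm : MeasurableSet[S.Fplus.prod inferInstance] Q := by
      refine .union ?_ (measurableSet_setOf_exists_lt_twoPoint hGm l F.countable_toSet hFb)
      exact hGm.comp (@measurable_snd _ _ S.Fplus _) measurableSet_Ioi
    have hrestart (ω : Ω) : (∃ t ∈ insert b F, l < G (S.twoPoint (t - a) ω z)) ↔
        (S.θ (b - a) ω, S.twoPoint (b - a) ω z) ∈ Q := by
      rw [Finset.exists_mem_insert]
      refine or_congr_right (exists_congr fun t ↦ and_congr_right fun ht ↦ ?_)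
      rw [← S.twoPoint_add hba (hFb t ht), add_comm, sub_add_sub_cancel]
    have hsection (w : UnitAddCircle × UnitAddCircle) : l * S.P {ω | (ω, w) ∈ Q} ≤ G w := by
      by_cases hw : l < G w
      · exact (mul_le_of_le_one_right' prob_le_one).trans hw.le
      · simpa only [hQ, mem_union, mem_ofPred_eq, hw, false_or, SetLike.mem_coe] using
          ih hF' hb (fun t ht ↦ (hbF t ht).le) w
    simp only [hrestart]
    exact (S.mul_measure_θ_twoPoint_mem_le hba z hQm hsection).trans (hG _ hba z)

theorem exists_lt_twoPoint_iff_exists_ratTimes (hG : LowerSemicontinuous G) (l : ℝ≥0∞) (ω : Ω)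
    (z : UnitAddCircle × UnitAddCircle) :
    (∃ t ∈ S.T, l < G (S.twoPoint t ω z)) ↔ ∃ t ∈ S.ratTimes, l < G (S.twoPoint t ω z) :=
  S.exists_twoPoint_mem_iff_exists_ratTimes (hG.isOpen_preimage l) ω z

theorem IsSupermedian.mul_measure_exists_lt_le (hG : S.IsSupermedian G)
    (hGlsc : LowerSemicontinuous G) (l : ℝ≥0∞) (z : UnitAddCircle × UnitAddCircle) :
    l * S.P {ω | ∃ t ∈ S.T, l < G (S.twoPoint t ω z)} ≤ G z := by
  have := S.countable_ratTimes.to_subtype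
  let E (F : Finset S.ratTimes) : Set Ω :=
    {ω | ∃ t ∈ F.map (.subtype _), l < G (S.twoPoint (t - 0) ω z)}
  have hE (F : Finset S.ratTimes) : l * S.P (E F) ≤ G z := by
    have hF (t : ℝ) (ht : t ∈ F.map (.subtype _)) : t ∈ S.T := by
      obtain ⟨t, -, rfl⟩ := Finset.mem_map.1 ht
      exact t.2.1
    exact hG.mul_measure_exists_mem_finset_lt_le hGlsc.measurable l hF S.zero_mem_T
      (fun t ht ↦ S.nonneg_of_mem_T (hF t ht)) z
  have hdir : Directed (· ⊆ ·) E :=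
    directed_of_isDirected_le fun F F' hFF' ω ⟨t, ht, htω⟩ ↦
      ⟨t, Finset.map_subset_map.2 hFF' ht, htω⟩
  have hiUnion : {ω | ∃ t ∈ S.T, l < G (S.twoPoint t ω z)} = ⋃ F, E F := by
    ext ω
    simp only [mem_ofPred_eq, exists_lt_twoPoint_iff_exists_ratTimes hGlsc, mem_iUnion, E,
      sub_zero, Finset.mem_map, Function.Embedding.subtype_apply]
    refine ⟨fun ⟨t, ht, htω⟩ ↦ ⟨{⟨t, ht⟩}, t, ⟨_, Finset.mem_singleton_self _, rfl⟩, htω⟩, ?_⟩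
    rintro ⟨-, -, ⟨t, -, rfl⟩, htω⟩
    exact ⟨t, t.2, htω⟩
  rw [hiUnion, hdir.measure_iUnion, ENNReal.mul_iSup]
  exact iSup_le hE

theorem IsSupermedian.mul_measure_le_and_exists_lt_le (hG : S.IsSupermedian G)
    (hGlsc : LowerSemicontinuous G) (l η : ℝ≥0∞) {s : ℝ} (hs : s ∈ S.T)
    (z : UnitAddCircle × UnitAddCircle) :
    l * S.P {ω | G (S.twoPoint s ω z) ≤ η ∧ ∃ t ∈ S.T, l < G (S.twoPoint (s + t) ω z)} ≤ η := by
  set Q := {q : Ω × UnitAddCircle × UnitAddCircle | G q.2 ≤ η} ∩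
    {q | ∃ t ∈ S.ratTimes, l < G (S.twoPoint t q.1 q.2)} with hQ
  have hQm : MeasurableSet[S.Fplus.prod inferInstance] Q := by
    refine .inter ?_ (measurableSet_setOf_exists_lt_twoPoint hGlsc.measurable l
      S.countable_ratTimes fun t ht ↦ ht.1)
    exact hGlsc.measurable.comp (@measurable_snd _ _ S.Fplus _) measurableSet_Iic
  have hrestart (ω : Ω) : (G (S.twoPoint s ω z) ≤ η ∧
      ∃ t ∈ S.T, l < G (S.twoPoint (s + t) ω z)) ↔ (S.θ s ω, S.twoPoint s ω z) ∈ Q := by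
    refine and_congr_right fun _ ↦ Iff.trans (exists_congr fun t ↦ and_congr_right fun ht ↦ ?_)
      (exists_lt_twoPoint_iff_exists_ratTimes hGlsc l _ _)
    rw [S.twoPoint_add hs ht]
  have hsection (w : UnitAddCircle × UnitAddCircle) : l * S.P {ω | (ω, w) ∈ Q} ≤ η := by
    by_cases hw : G w ≤ η
    · simpa only [hQ, mem_inter_iff, mem_ofPred_eq, hw, true_and,
        exists_lt_twoPoint_iff_exists_ratTimes hGlsc] using
        (hG.mul_measure_exists_lt_le hGlsc l w).trans hw
    · simp only [hQ, mem_inter_iff, mem_ofPred_eq, hw, false_and, ofPred_false, measure_empty,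
        mul_zero, zero_le]
  simp only [hrestart]
  refine (S.mul_measure_θ_twoPoint_mem_le hs z hQm hsection).trans ?_
  rw [lintegral_const, measure_univ, mul_one]

theorem IsSupermedian.measure_le_and_not_eventually_le_le (hG : S.IsSupermedian G)
    (hGlsc : LowerSemicontinuous G) (l : ℝ≥0∞) {η : ℝ≥0∞} (hη : η ≠ 0) (hη' : η ≠ ∞) {s : ℝ}
    (hs : s ∈ S.T) (z : UnitAddCircle × UnitAddCircle) :
    S.P {ω | G (S.twoPoint s ω z) ≤ η ∧ ¬∀ᶠ t in S.tFilter, G (S.twoPoint t ω z) ≤ l} ≤ η / l := by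
  rw [ENNReal.le_div_iff_mul_le (.inr hη) (.inr hη'), mul_comm]
  refine (mul_le_mul_right (measure_mono ?_) l).trans
    (hG.mul_measure_le_and_exists_lt_le hGlsc l η hs z)
  refine fun ω ⟨hsmall, hnot⟩ ↦ ⟨hsmall, ?_⟩
  by_contra! hle
  exact hnot (S.mem_tFilter hs hle)

end MaximalInequality

section TwoPointMean

/-- The transition operator of the two-point motion: the mean of `f` over the position at time `t`
of the pair started at `z`. -/
def twoPointMean (t : ℝ) (f : UnitAddCircle × UnitAddCircle → ℝ)
    (z : UnitAddCircle × UnitAddCircle) : ℝ :=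
  ∫ ω, f (S.twoPoint t ω z) ∂S.P

variable {f : UnitAddCircle × UnitAddCircle → ℝ} (hf : Continuous f) {s t : ℝ}
include hf

theorem integrable_comp_twoPoint (ht : t ∈ S.T) (z : UnitAddCircle × UnitAddCircle) :
    Integrable (fun ω ↦ f (S.twoPoint t ω z)) S.P := by
  obtain ⟨b, hb⟩ := isCompact_univ.exists_bound_of_continuousOn hf.continuousOn
  exact .of_bound (hf.measurable.comp (S.measurable_twoPoint_apply ht z)).aestronglyMeasurable b
    (Eventually.of_forall fun ω ↦ hb _ (mem_univ _))

theorem continuous_twoPointMean (ht : t ∈ S.T) : Continuous (S.twoPointMean t f) := by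
  obtain ⟨b, hb⟩ := isCompact_univ.exists_bound_of_continuousOn hf.continuousOn
  exact continuous_of_dominated (fun z ↦ (S.integrable_comp_twoPoint hf ht z).aestronglyMeasurable)
    (fun z ↦ Eventually.of_forall fun ω ↦ hb _ (mem_univ _)) (integrable_const b)
    (Eventually.of_forall fun ω ↦ hf.comp (S.continuous_twoPoint t ω))

theorem twoPointMean_mono {g : UnitAddCircle × UnitAddCircle → ℝ} (hg : Continuous g)
    (ht : t ∈ S.T) (hfg : f ≤ g) : S.twoPointMean t f ≤ S.twoPointMean t g := fun z ↦
  integral_mono (S.integrable_comp_twoPoint hf ht z) (S.integrable_comp_twoPoint hg ht z)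
    fun _ ↦ hfg _

theorem ofReal_twoPointMean (ht : t ∈ S.T) (hf₀ : 0 ≤ f) (z : UnitAddCircle × UnitAddCircle) :
    ENNReal.ofReal (S.twoPointMean t f z) = ∫⁻ ω, ENNReal.ofReal (f (S.twoPoint t ω z)) ∂S.P :=
  ofReal_integral_eq_lintegral_ofReal (S.integrable_comp_twoPoint hf ht z)
    (Eventually.of_forall fun _ ↦ hf₀ _)

theorem twoPointMean_add (hs : s ∈ S.T) (ht : t ∈ S.T) (hf₀ : 0 ≤ f) :
    S.twoPointMean (s + t) f = S.twoPointMean s (S.twoPointMean t f) := by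
  have hmean_nonneg {r : ℝ} {g : UnitAddCircle × UnitAddCircle → ℝ} (hg : 0 ≤ g) :
      0 ≤ S.twoPointMean r g := fun _ ↦ integral_nonneg fun _ ↦ hg _
  ext z
  refine (ENNReal.ofReal_eq_ofReal_iff (hmean_nonneg hf₀ z)
    (hmean_nonneg (hmean_nonneg hf₀) z)).1 ?_
  rw [S.ofReal_twoPointMean hf (S.add_mem_T hs ht) hf₀,
    S.ofReal_twoPointMean (S.continuous_twoPointMean hf ht) hs (hmean_nonneg hf₀)]
  simp only [S.twoPoint_add hs ht, S.ofReal_twoPointMean hf ht hf₀]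
  exact S.lintegral_comp_θ_twoPoint hs z
    (H := fun q ↦ ENNReal.ofReal (f (S.twoPoint t q.1 q.2)))
    ((ENNReal.measurable_ofReal.comp hf.measurable).comp (S.measurable_twoPoint_Fplus ht))

end TwoPointMean

section ReverseStationary

variable {S} {ρ : Measure UnitAddCircle} {t : ℝ}

variable (ρ) in
theorem arcMass_twoPoint (ht : t ∈ S.T) (ω : Ω) (z : UnitAddCircle × UnitAddCircle) :
    arcMass ρ (S.twoPoint t ω z) = ρ (S.φ t ω '' cIoo z.1 z.2) := by
  rw [(S.φ_orient t ht ω).image_cIoo]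
  rfl

theorem ReverseStationary.lintegral_arcMass_twoPoint (hρ : S.ReverseStationary ρ) (ht : t ∈ S.T)
    (z : UnitAddCircle × UnitAddCircle) :
    ∫⁻ ω, arcMass ρ (S.twoPoint t ω z) ∂S.P = arcMass ρ z := by
  simp only [arcMass_twoPoint ρ ht]
  exact (hρ t ht _ (isOpen_cIoo _ _).measurableSet).symm

theorem ReverseStationary.isSupermedian_arcMass (hρ : S.ReverseStationary ρ) :
    S.IsSupermedian (arcMass ρ) := fun _ ht z ↦ (hρ.lintegral_arcMass_twoPoint ht z).le

theorem ReverseStationary.isSupermedian_arcMass_swap (hρ : S.ReverseStationary ρ) :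
    S.IsSupermedian fun z ↦ arcMass ρ z.swap :=
  fun _ ht z ↦ (hρ.lintegral_arcMass_twoPoint ht z.swap).le

section IsFiniteMeasure

variable [IsFiniteMeasure ρ]

variable (ρ) in
theorem measurable_arcMass_twoPoint (ht : t ∈ S.T) (z : UnitAddCircle × UnitAddCircle) :
    Measurable fun ω ↦ arcMass ρ (S.twoPoint t ω z) :=
  (measurable_arcMass ρ).comp (S.measurable_twoPoint_apply ht z)

theorem ReverseStationary.integral_arcMass_twoPoint (hρ : S.ReverseStationary ρ) (ht : t ∈ S.T)
    (z : UnitAddCircle × UnitAddCircle) :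
    ∫ ω, (arcMass ρ (S.twoPoint t ω z)).toReal ∂S.P = (arcMass ρ z).toReal := by
  rw [integral_toReal (measurable_arcMass_twoPoint ρ ht z).aemeasurable
    (Eventually.of_forall fun _ ↦ (arcMass_ne_top ρ _).lt_top),
    hρ.lintegral_arcMass_twoPoint ht]

end IsFiniteMeasure

variable [IsProbabilityMeasure ρ]

variable (ρ) in
theorem memLp_toReal_arcMass_twoPoint (ht : t ∈ S.T) (z : UnitAddCircle × UnitAddCircle)
    (p : ℝ≥0∞) :
    MemLp (fun ω ↦ (arcMass ρ (S.twoPoint t ω z)).toReal) p S.P := by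
  refine .of_bound (measurable_arcMass_twoPoint ρ ht z).ennreal_toReal.aestronglyMeasurable 1
    (Eventually.of_forall fun ω ↦ ?_)
  rw [Real.norm_of_nonneg toReal_nonneg]
  exact toReal_arcMass_le_one ρ _

variable [NullSingletonClass ρ]

theorem ReverseStationary.variance_arcMass_twoPoint (hρ : S.ReverseStationary ρ) (ht : t ∈ S.T)
    {z : UnitAddCircle × UnitAddCircle} (hz : z.1 ≠ z.2) :
    ProbabilityTheory.variance (fun ω ↦ (arcMass ρ (S.twoPoint t ω z)).toReal) S.P =
      arcLyapunov ρ z - S.twoPointMean t (arcLyapunov ρ) z := by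
  have hL := memLp_toReal_arcMass_twoPoint ρ ht z
  have hmean : S.twoPointMean t (arcLyapunov ρ) z = (arcMass ρ z).toReal -
      ∫ ω, (arcMass ρ (S.twoPoint t ω z)).toReal ^ 2 ∂S.P := by
    simp only [twoPointMean, arcLyapunov_eq_sub_sq ρ (S.twoPoint_fst_ne_snd t _ hz)]
    rw [integral_sub (memLp_one_iff_integrable.1 (hL 1)) (hL 2).integrable_sq,
      hρ.integral_arcMass_twoPoint ht]
  rw [ProbabilityTheory.variance_eq_sub (hL 2), hmean, arcLyapunov_eq_sub_sq ρ hz]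
  simp only [Pi.pow_apply, hρ.integral_arcMass_twoPoint ht]
  ring

end ReverseStationary

variable {S}

theorem Contractible.exists_not_ae_dist_le (hS : S.Contractible)
    {z : UnitAddCircle × UnitAddCircle} (hz : z.1 ≠ z.2) :
    ∃ t ∈ S.T, ¬ ∀ᵐ ω ∂S.P, dist z.1 z.2 ≤ dist (S.twoPoint t ω z).1 (S.twoPoint t ω z).2 := by
  by_contra! hall
  refine (hS z.1 z.2 hz).ne' ?_
  have hopen : IsOpen {w : UnitAddCircle × UnitAddCircle | dist w.1 w.2 < dist z.1 z.2} :=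
    isOpen_lt continuous_dist continuous_const
  have hrat := (ae_ball_iff S.countable_ratTimes).2 fun t ht ↦ hall t ht.1
  refine measure_mono_null (fun ω hω ↦ ?_) (ae_iff.1 hrat)
  obtain ⟨t, ht, hlt⟩ := (S.exists_twoPoint_mem_iff_exists_ratTimes hopen ω z).1 hω
  exact fun hle ↦ (hle t ht).not_gt hlt

section Descent

variable {ρ : Measure UnitAddCircle} [IsProbabilityMeasure ρ] [NullSingletonClass ρ]
  (hρ : S.ReverseStationary ρ) {s t : ℝ}
include hρ

theorem ReverseStationary.twoPointMean_arcLyapunov_le (ht : t ∈ S.T) :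
    S.twoPointMean t (arcLyapunov ρ) ≤ arcLyapunov ρ := by
  intro z
  by_cases hz : z.1 = z.2
  · have hX (ω : Ω) : (S.twoPoint t ω z).1 = (S.twoPoint t ω z).2 := congrArg (S.φ t ω) hz
    simp only [twoPointMean, arcLyapunov_eq_zero ρ (hX _), integral_zero, arcLyapunov_eq_zero ρ hz,
      le_refl]
  · have := ProbabilityTheory.variance_nonneg
      (fun ω ↦ (arcMass ρ (S.twoPoint t ω z)).toReal) S.P
    rwa [hρ.variance_arcMass_twoPoint ht hz, sub_nonneg] at this

theorem ReverseStationary.twoPointMean_arcLyapunov_antitone (hs : s ∈ S.T) (ht : t ∈ S.T)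
    (hst : s ≤ t) : S.twoPointMean t (arcLyapunov ρ) ≤ S.twoPointMean s (arcLyapunov ρ) := by
  have hΦ := continuous_arcLyapunov ρ
  have hts := S.sub_mem_T hs ht hst
  rw [← add_sub_cancel s t, S.twoPointMean_add hΦ hs hts (arcLyapunov_nonneg ρ)]
  exact S.twoPointMean_mono (S.continuous_twoPointMean hΦ hts) hΦ hs
    (hρ.twoPointMean_arcLyapunov_le hts)

theorem ReverseStationary.ae_arcLyapunov_twoPoint_eq (ht : t ∈ S.T)
    {z : UnitAddCircle × UnitAddCircle} (hz : z.1 ≠ z.2)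
    (hmean : S.twoPointMean t (arcLyapunov ρ) z = arcLyapunov ρ z) :
    ∀ᵐ ω ∂S.P, arcLyapunov ρ (S.twoPoint t ω z) = arcLyapunov ρ z := by
  have hvar := hρ.variance_arcMass_twoPoint ht hz
  rw [hmean, sub_self] at hvar
  filter_upwards [ProbabilityTheory.ae_eq_integral_of_variance_eq_zero
    (memLp_toReal_arcMass_twoPoint ρ ht z 2) hvar] with ω hω
  rw [arcLyapunov_eq_sub_sq ρ (S.twoPoint_fst_ne_snd t ω hz), arcLyapunov_eq_sub_sq ρ hz, hω,
    hρ.integral_arcMass_twoPoint ht]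

theorem ReverseStationary.ae_twoPointMean_twoPoint_eq (ht : t ∈ S.T)
    {z : UnitAddCircle × UnitAddCircle} (hz : z.1 ≠ z.2)
    (hmean : ∀ n : ℕ, S.twoPointMean n (arcLyapunov ρ) z = arcLyapunov ρ z) :
    ∀ᵐ ω ∂S.P, arcLyapunov ρ (S.twoPoint t ω z) = arcLyapunov ρ z ∧
      ∀ n : ℕ, S.twoPointMean n (arcLyapunov ρ) (S.twoPoint t ω z) = arcLyapunov ρ z := by
  have hΦ := continuous_arcLyapunov ρ
  have hmeanT {r : ℝ} (hr : r ∈ S.T) : S.twoPointMean r (arcLyapunov ρ) z = arcLyapunov ρ z := by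
    obtain ⟨n, hn⟩ := exists_nat_ge r
    exact (hρ.twoPointMean_arcLyapunov_le hr z).antisymm
      ((hmean n).ge.trans (hρ.twoPointMean_arcLyapunov_antitone hr (S.natCast_mem_T n) hn z))
  have heq (n : ℕ) : ∀ᵐ ω ∂S.P, S.twoPointMean n (arcLyapunov ρ) (S.twoPoint t ω z) =
      arcLyapunov ρ (S.twoPoint t ω z) := by
    have hn := S.natCast_mem_T n
    refine (integral_eq_iff_of_ae_le
      (S.integrable_comp_twoPoint (S.continuous_twoPointMean hΦ hn) ht z)
      (S.integrable_comp_twoPoint hΦ ht z)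
      (Eventually.of_forall fun ω ↦ hρ.twoPointMean_arcLyapunov_le hn _)).1 ?_
    calc S.twoPointMean t (S.twoPointMean n (arcLyapunov ρ)) z
        = S.twoPointMean (t + n) (arcLyapunov ρ) z := by
          rw [S.twoPointMean_add hΦ ht hn (arcLyapunov_nonneg ρ)]
      _ = S.twoPointMean t (arcLyapunov ρ) z := by rw [hmeanT (S.add_mem_T ht hn), hmeanT ht]
  filter_upwards [hρ.ae_arcLyapunov_twoPoint_eq ht hz (hmeanT ht), ae_all_iff.2 heq] with ω h₁ h₂
  exact ⟨h₁, fun n ↦ (h₂ n).trans h₁⟩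

theorem ReverseStationary.exists_twoPointMean_arcLyapunov_lt (hS : S.Contractible)
    {z : UnitAddCircle × UnitAddCircle} (hz : 0 < arcLyapunov ρ z) :
    ∃ n : ℕ, S.twoPointMean n (arcLyapunov ρ) z < arcLyapunov ρ z := by
  by_contra! hge
  have hΦ := continuous_arcLyapunov ρ
  let K := {w | arcLyapunov ρ w = arcLyapunov ρ z ∧
    ∀ n : ℕ, S.twoPointMean n (arcLyapunov ρ) w = arcLyapunov ρ z}
  have hlevel : IsClosed {w | ∀ n : ℕ,
      S.twoPointMean n (arcLyapunov ρ) w = arcLyapunov ρ z} := by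
    simp only [ofPred_forall]
    exact isClosed_iInter fun n ↦
      isClosed_eq (S.continuous_twoPointMean hΦ (S.natCast_mem_T n)) continuous_const
  have hK : IsCompact K := ((isClosed_eq hΦ continuous_const).inter hlevel).isCompact
  have hzK : z ∈ K :=
    ⟨rfl, fun n ↦ (hρ.twoPointMean_arcLyapunov_le (S.natCast_mem_T n) z).antisymm (hge n)⟩
  obtain ⟨w, hwK, hwmin⟩ := hK.exists_isMinOn ⟨z, hzK⟩ continuous_dist.continuousOn
  have hw : w.1 ≠ w.2 := fun h ↦ (hwK.1 ▸ hz).ne' (arcLyapunov_eq_zero ρ h)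
  obtain ⟨t, ht, hnot⟩ := hS.exists_not_ae_dist_le hw
  refine hnot ?_
  filter_upwards [hρ.ae_twoPointMean_twoPoint_eq ht hw fun n ↦ (hwK.2 n).trans hwK.1.symm]
    with ω hω
  exact hwmin ⟨hω.1.trans hwK.1, fun n ↦ (hω.2 n).trans hwK.1⟩

theorem ReverseStationary.exists_forall_le_arcLyapunov_sub_twoPointMean (hS : S.Contractible)
    {ε : ℝ} (hε : 0 < ε) : ∃ N : ℕ, ∃ δ > 0, ∀ z, ε ≤ arcLyapunov ρ z →
      δ ≤ arcLyapunov ρ z - S.twoPointMean N (arcLyapunov ρ) z := by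
  have hΦ := continuous_arcLyapunov ρ
  have hmean (n : ℕ) := S.continuous_twoPointMean hΦ (S.natCast_mem_T n)
  have hK : IsCompact {z | ε ≤ arcLyapunov ρ z} := (isClosed_le continuous_const hΦ).isCompact
  obtain ⟨N, hN⟩ := hK.elim_directed_cover
    (fun n : ℕ ↦ {z | S.twoPointMean n (arcLyapunov ρ) z < arcLyapunov ρ z})
    (fun n ↦ isOpen_lt (hmean n) hΦ)
    (fun z hz ↦ mem_iUnion.2 (hρ.exists_twoPointMean_arcLyapunov_lt hS (hε.trans_le hz)))
    (directed_of_isDirected_le fun i j hij z hz ↦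
      (hρ.twoPointMean_arcLyapunov_antitone (S.natCast_mem_T i) (S.natCast_mem_T j)
        (Nat.cast_le.2 hij) z).trans_lt hz)
  exact ⟨N, hK.exists_forall_le' (hΦ.sub (hmean N)).continuousOn fun z hz ↦ sub_pos.2 (hN hz)⟩

theorem ReverseStationary.mul_measure_arcLyapunov_twoPoint_le (hs : s ∈ S.T) (ht : t ∈ S.T)
    {ε δ : ℝ} (hdrop : ∀ z, ε ≤ arcLyapunov ρ z →
      δ ≤ arcLyapunov ρ z - S.twoPointMean t (arcLyapunov ρ) z)
    (z : UnitAddCircle × UnitAddCircle) (hδ : 0 ≤ δ) :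
    δ * S.P.real {ω | ε ≤ arcLyapunov ρ (S.twoPoint s ω z)} ≤
      S.twoPointMean s (arcLyapunov ρ) z - S.twoPointMean (s + t) (arcLyapunov ρ) z := by
  have hΦ := continuous_arcLyapunov ρ
  have hmean := S.continuous_twoPointMean hΦ ht
  let D (w : UnitAddCircle × UnitAddCircle) : ℝ :=
    arcLyapunov ρ w - S.twoPointMean t (arcLyapunov ρ) w
  calc δ * S.P.real {ω | ε ≤ arcLyapunov ρ (S.twoPoint s ω z)}
      ≤ δ * S.P.real {ω | δ ≤ D (S.twoPoint s ω z)} :=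
        mul_le_mul_of_nonneg_left (measureReal_mono fun ω ↦ hdrop _) hδ
    _ ≤ ∫ ω, D (S.twoPoint s ω z) ∂S.P :=
        mul_meas_ge_le_integral_of_nonneg
          (Eventually.of_forall fun ω ↦ sub_nonneg.2 (hρ.twoPointMean_arcLyapunov_le ht _))
          (S.integrable_comp_twoPoint (hΦ.sub hmean) hs z) δ
    _ = S.twoPointMean s (arcLyapunov ρ) z - S.twoPointMean (s + t) (arcLyapunov ρ) z := by
        rw [S.twoPointMean_add hΦ hs ht (arcLyapunov_nonneg ρ)]
        exact integral_sub (S.integrable_comp_twoPoint hΦ hs z)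
          (S.integrable_comp_twoPoint hmean hs z)

theorem ReverseStationary.exists_measure_arcLyapunov_twoPoint_le (hS : S.Contractible)
    (z : UnitAddCircle × UnitAddCircle) {ε : ℝ} (hε : 0 < ε) {η : ℝ} (hη : 0 < η) :
    ∃ s ∈ S.T, S.P.real {ω | ε ≤ arcLyapunov ρ (S.twoPoint s ω z)} ≤ η := by
  obtain ⟨N, δ, hδ, hdrop⟩ := hρ.exists_forall_le_arcLyapunov_sub_twoPointMean hS hε
  let a (k : ℕ) : ℝ := S.twoPointMean (k * N : ℕ) (arcLyapunov ρ) z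
  have ha : Antitone a := fun i j hij ↦
    hρ.twoPointMean_arcLyapunov_antitone (S.natCast_mem_T _) (S.natCast_mem_T _)
      (Nat.cast_le.2 (Nat.mul_le_mul_right N hij)) z
  have ha₀ : BddBelow (range a) :=
    ⟨0, forall_mem_range.2 fun k ↦ integral_nonneg fun ω ↦ arcLyapunov_nonneg ρ _⟩
  have hlim := tendsto_atTop_ciInf ha ha₀
  have hdiff : Tendsto (fun k ↦ a k - a (k + 1)) atTop (𝓝 0) := by
    simpa only [sub_self, Function.comp_def] using
      hlim.sub (hlim.comp (tendsto_add_atTop_nat 1))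
  obtain ⟨k, hk⟩ := (hdiff.eventually_lt_const (mul_pos hδ hη)).exists
  refine ⟨(k * N : ℕ), S.natCast_mem_T _, le_of_mul_le_mul_left ?_ hδ⟩
  calc δ * S.P.real {ω | ε ≤ arcLyapunov ρ (S.twoPoint (k * N : ℕ) ω z)}
      ≤ a k - S.twoPointMean ((k * N : ℕ) + N) (arcLyapunov ρ) z :=
        hρ.mul_measure_arcLyapunov_twoPoint_le (S.natCast_mem_T _) (S.natCast_mem_T N) hdrop z
          hδ.le
    _ = a k - a (k + 1) := by rw [← Nat.cast_add, ← Nat.succ_mul]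
    _ ≤ δ * η := hk.le

end Descent

instance : S.tFilter.NeBot :=
  (tendsto_inf.2 ⟨tendsto_natCast_atTop_atTop,
    tendsto_principal.2 (Eventually.of_forall S.natCast_mem_T)⟩ :
      Tendsto ((↑) : ℕ → ℝ) atTop S.tFilter).neBot

section Synchronisation

variable {ρ : Measure UnitAddCircle} [IsProbabilityMeasure ρ] [NullSingletonClass ρ]
  (hρ : S.ReverseStationary ρ)
include hρ

theorem ReverseStationary.measure_not_eventually_arcMass_le_or_le (hS : S.Contractible)
    {z : UnitAddCircle × UnitAddCircle} (hz : z.1 ≠ z.2) (l : ℝ≥0∞) {η : ℝ} (hη : 0 < η) :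
    S.P {ω | ¬((∀ᶠ t in S.tFilter, arcMass ρ (S.twoPoint t ω z) ≤ l) ∨
      ∀ᶠ t in S.tFilter, arcMass ρ (S.twoPoint t ω z).swap ≤ l)} ≤
      ENNReal.ofReal η * (1 + 2 / l) := by
  obtain ⟨s, hs, hsmall⟩ := hρ.exists_measure_arcLyapunov_twoPoint_le hS z (half_pos hη) hη
  let bad (G : UnitAddCircle × UnitAddCircle → ℝ≥0∞) : Set Ω :=
    {ω | G (S.twoPoint s ω z) ≤ ENNReal.ofReal η ∧ ¬∀ᶠ t in S.tFilter, G (S.twoPoint t ω z) ≤ l}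
  have hlsc := lowerSemicontinuous_arcMass ρ
  have hη' := (ofReal_pos.2 hη).ne'
  calc S.P {ω | ¬((∀ᶠ t in S.tFilter, arcMass ρ (S.twoPoint t ω z) ≤ l) ∨
        ∀ᶠ t in S.tFilter, arcMass ρ (S.twoPoint t ω z).swap ≤ l)}
      ≤ S.P ({ω | η / 2 ≤ arcLyapunov ρ (S.twoPoint s ω z)} ∪
          (bad (arcMass ρ) ∪ bad fun w ↦ arcMass ρ w.swap)) := by
        refine measure_mono fun ω hω ↦ or_iff_not_imp_left.2 fun hΦ ↦ ?_
        obtain ⟨hmass, hswap⟩ := not_or.1 hω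
        exact (arcMass_le_or_arcMass_swap_le ρ (S.twoPoint_fst_ne_snd s ω hz) (not_le.1 hΦ)).imp
          (⟨·, hmass⟩) (⟨·, hswap⟩)
    _ ≤ S.P {ω | η / 2 ≤ arcLyapunov ρ (S.twoPoint s ω z)} +
          (S.P (bad (arcMass ρ)) + S.P (bad fun w ↦ arcMass ρ w.swap)) :=
        (measure_union_le _ _).trans (add_le_add_right (measure_union_le _ _) _)
    _ ≤ ENNReal.ofReal η + (ENNReal.ofReal η / l + ENNReal.ofReal η / l) := by
        refine add_le_add ?_ (add_le_add ?_ ?_)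
        · rw [← ofReal_measureReal]
          exact ofReal_le_ofReal hsmall
        · exact hρ.isSupermedian_arcMass.measure_le_and_not_eventually_le_le hlsc l hη'
            ofReal_ne_top hs z
        · exact hρ.isSupermedian_arcMass_swap.measure_le_and_not_eventually_le_le
            (hlsc.comp continuous_swap) l hη' ofReal_ne_top hs z
    _ = ENNReal.ofReal η * (1 + 2 / l) := by
        simp only [div_eq_mul_inv]
        ring

theorem ReverseStationary.ae_eventually_arcMass_le_or (hS : S.Contractible)
    {z : UnitAddCircle × UnitAddCircle} (hz : z.1 ≠ z.2) {l : ℝ≥0∞} (hl : l ≠ 0) :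
    ∀ᵐ ω ∂S.P, (∀ᶠ t in S.tFilter, arcMass ρ (S.twoPoint t ω z) ≤ l) ∨
      ∀ᶠ t in S.tFilter, arcMass ρ (S.twoPoint t ω z).swap ≤ l := by
  have hlim : Tendsto (fun η ↦ ENNReal.ofReal η * (1 + 2 / l)) (𝓝[>] 0) (𝓝 0) := by
    have hconst : 1 + 2 / l ≠ ∞ :=
      add_ne_top.2 ⟨one_ne_top, div_ne_top ofNat_ne_top hl⟩
    simpa only [ofReal_zero, zero_mul] using ENNReal.Tendsto.mul_const
      ((ENNReal.continuous_ofReal.tendsto 0).mono_left nhdsWithin_le_nhds) (.inr hconst)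
  exact ae_iff.2 <| nonpos_iff_eq_zero.1 <| ge_of_tendsto hlim <|
    eventually_mem_nhdsWithin.mono fun η hη ↦
      hρ.measure_not_eventually_arcMass_le_or_le hS hz l hη

theorem ReverseStationary.ae_tendsto_arcMass_or (hS : S.Contractible)
    (z : UnitAddCircle × UnitAddCircle) :
    ∀ᵐ ω ∂S.P, Tendsto (fun t ↦ arcMass ρ (S.twoPoint t ω z)) S.tFilter (𝓝 0) ∨
      Tendsto (fun t ↦ arcMass ρ (S.twoPoint t ω z).swap) S.tFilter (𝓝 0) := by
  by_cases hz : z.1 = z.2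
  · have hX (t : ℝ) (ω : Ω) : arcMass ρ (S.twoPoint t ω z) = 0 := by
      rw [twoPoint, hz, arcMass_self]
    simp only [hX, tendsto_const_nhds, true_or, eventually_true]
  · have hle (n : ℕ) := hρ.ae_eventually_arcMass_le_or hS hz
      (ENNReal.inv_ne_zero.2 (natCast_ne_top n))
    filter_upwards [ae_all_iff.2 hle] with ω hω
    exact tendsto_zero_or_tendsto_zero ENNReal.tendsto_inv_nat_nhds_zero hω

theorem ReverseStationary.ae_tendsto_dist [ρ.IsOpenPosMeasure] (hS : S.Contractible)
    (x y : UnitAddCircle) :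
    ∀ᵐ ω ∂S.P, Tendsto (fun t ↦ dist (S.φ t ω x) (S.φ t ω y)) S.tFilter (𝓝 0) := by
  filter_upwards [hρ.ae_tendsto_arcMass_or hS (x, y)] with ω hω
  rcases hω with h | h
  · exact tendsto_dist_of_tendsto_arcMass ρ (z := fun t ↦ S.twoPoint t ω (x, y)) h
  · exact (tendsto_dist_of_tendsto_arcMass ρ (z := fun t ↦ (S.twoPoint t ω (x, y)).swap) h).congr
      fun t ↦ dist_comm _ _

theorem ReverseStationary.ae_tendsto_arcMass_of_forall_le (hS : S.Contractible)
    {z : UnitAddCircle × UnitAddCircle} (hz : z.1 ≠ z.2) :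
    ∀ᵐ ω ∂S.P, (∀ t ∈ S.T, arcMass ρ (S.twoPoint t ω z) ≤ 2⁻¹) →
      Tendsto (fun t ↦ arcMass ρ (S.twoPoint t ω z)) S.tFilter (𝓝 0) := by
  filter_upwards [hρ.ae_tendsto_arcMass_or hS z] with ω hω hle
  refine hω.resolve_right fun hswap ↦ ?_
  have hT : S.T ∈ S.tFilter := mem_inf_of_right (mem_principal_self _)
  have hhalf : (0 : ℝ≥0∞) < 2⁻¹ := ENNReal.inv_pos.2 ofNat_ne_top
  obtain ⟨t, hlt, ht⟩ := ((hswap.eventually_lt_const hhalf).and hT).exists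
  refine (ENNReal.add_lt_add_of_le_of_lt (arcMass_ne_top ρ _) (hle t ht) hlt).ne ?_
  rw [arcMass_add_arcMass_swap ρ (S.twoPoint_fst_ne_snd t ω hz), ENNReal.inv_two_add_inv_two]

/-- An arc around `x` of small `ρ`-mass probably never grows beyond mass `1 / 2`, and then it is
the arc, rather than its complement, whose mass tends to zero. -/
theorem ReverseStationary.ae_exists_isOpen_tendsto_volume [ρ.IsOpenPosMeasure]
    (hS : S.Contractible) (x : UnitAddCircle) :
    ∀ᵐ ω ∂S.P, ∃ U, IsOpen U ∧ x ∈ U ∧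
      Tendsto (fun t ↦ volume (S.φ t ω '' U)) S.tFilter (𝓝 0) := by
  have hbound (ε : ℝ≥0∞) (hε : 0 < ε) : 2⁻¹ * S.P {ω | ¬ ∃ U, IsOpen U ∧ x ∈ U ∧
      Tendsto (fun t ↦ volume (S.φ t ω '' U)) S.tFilter (𝓝 0)} ≤ ε := by
    obtain ⟨y, z, hx, hlt⟩ := exists_mem_cIoo_arcMass_lt ρ x hε
    have hyz : y ≠ z := by
      rintro rfl
      exact absurd hx (by rw [cIoo_self]; exact notMem_empty x)
    refine le_trans ?_ ((hρ.isSupermedian_arcMass.mul_measure_exists_lt_le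
      (lowerSemicontinuous_arcMass ρ) 2⁻¹ (y, z)).trans hlt.le)
    refine mul_le_mul_right (measure_mono_ae ?_) _
    filter_upwards [hρ.ae_tendsto_arcMass_of_forall_le hS (z := (y, z)) hyz] with ω hω hbad
    by_contra hle
    have hvol := tendsto_volume_of_tendsto_arcMass ρ (hω fun t ht ↦
      not_lt.1 fun hlt ↦ hle ⟨t, ht, hlt⟩)
    refine hbad ⟨cIoo y z, isOpen_cIoo y z, hx, hvol.congr' ?_⟩
    filter_upwards [mem_inf_of_right (mem_principal_self _)] with t ht
    rw [(S.φ_orient t ht ω).image_cIoo, twoPoint]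
  have hzero := nonpos_iff_eq_zero.1 (le_of_forall_gt_imp_ge_of_dense hbound)
  exact ae_iff.2 ((mul_eq_zero.1 hzero).resolve_left (ENNReal.inv_ne_zero.2 ofNat_ne_top))

end Synchronisation

end RDS

/-- if `φ` is contractible and admits an atomless reverse-stationary probability
measure of full support, then `φ` is stably synchronising. -/
theorem contractible_atomless_fullSupport_reverseStationary_stablySynchronising
    {Ω : Type} [MeasurableSpace Ω] (S : RDS Ω) (h : S.Contractible)
    (ρ : Measure UnitAddCircle) [IsProbabilityMeasure ρ]
    (hatomless : Atomless ρ) (hfull : FullSupport ρ) (hstat : S.ReverseStationary ρ) :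
    S.StablySynchronising := by
  have : NullSingletonClass ρ := ⟨hatomless⟩
  have : ρ.IsOpenPosMeasure := ⟨fun U hU hne ↦ (hfull U hU hne).ne'⟩
  have hprob {A : Set Ω} (hA : ∀ᵐ ω ∂S.P, ω ∈ A) : S.P A = 1 :=
    (measure_congr (eventuallyEq_univ.2 hA)).trans measure_univ
  exact ⟨fun x y ↦ hprob (hstat.ae_tendsto_dist h x y),
    fun x ↦ hprob (hstat.ae_exists_isOpen_tendsto_volume h x)⟩
end
end

section
/- If the invertible RDS φ on 𝕊¹ has reverse-minimal dynamics, then every reverse-stationary probability measure of φ is atomless and has full support. -/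
open MeasureTheory Filter Topology Set ENNReal

noncomputable section

/-!
Both conclusions come from a compact set `K` whose complement is almost surely mapped into itself
at each fixed time. Right-continuity of the cocycle and compactness of `K` upgrade this to almost
sure invariance at all times simultaneously, so reverse-minimality forces `K` to be empty or
everything.

For full support, `K` is the support of `ρ`: its complement is null, so by reverse-stationarity its
random images are almost surely null. For atomlessness, `K` is the set of points of maximal
`ρ`-mass, which is finite if `ρ` has an atom: the average of `ρ {φ(t,ω)x}` equals the maximal value
`ρ {x}`, so `φ(t,ω)` almost surely permutes `K`.
-/

theorem exists_countable_forall_antitone_tendsto {ι : Type*} [LinearOrder ι] [TopologicalSpace ι]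
    [OrderTopology ι] [SecondCountableTopology ι] (T : Set ι) :
    ∃ Q ⊆ T, Q.Countable ∧ ∀ t ∈ T, ∃ u : ℕ → ι,
      (∀ n, u n ∈ Q) ∧ Antitone u ∧ Tendsto u atTop (𝓝 t) := by
  obtain ⟨D, hDT, hD, hTD⟩ :=
    (TopologicalSpace.IsSeparable.of_separableSpace T).exists_countable_dense_subset
  -- A right-isolated point of `T` need not be a limit of `D` from the right, so it is added to `Q`.
  refine ⟨{t ∈ T | 𝓝[T ∩ Ioi t] t = ⊥} ∪ D, union_subset (sep_subset _ _) hDT,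
    countable_setOfPred_isolated_right_within.union hD, fun t ht => ?_⟩
  by_cases hiso : 𝓝[T ∩ Ioi t] t = ⊥
  · exact ⟨fun _ => t, fun _ => Or.inl ⟨ht, hiso⟩, antitone_const, tendsto_const_nhds⟩
  · have htT : t ∈ closure (T ∩ Ioi t) := mem_closure_iff_nhdsWithin_neBot.2 ⟨hiso⟩
    have htD : t ∈ closure (D ∩ Ioi t) :=
      closure_minimal ((inter_subset_inter_left _ hTD).trans isOpen_Ioi.closure_inter)
        isClosed_closure htT
    obtain ⟨u, hu, -, hlim, hmem⟩ :=
      (isGLB_of_mem_closure (fun s hs => hs.2.le) htD).exists_seq_antitone_tendsto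
        (closure_nonempty_iff.1 ⟨t, htD⟩)
    exact ⟨u, fun n => Or.inr (hmem n).1, hu, hlim⟩

section Invariance

variable {Ω ι X : Type*} [MeasurableSpace Ω] [LinearOrder ι] [TopologicalSpace ι]
  [TopologicalSpace X]

/-- Joint right-continuity of a family of maps along a set `T` of times: `t_n ↓ t` in `T` and
`x_n → x` imply `Φ (t_n) x_n → Φ t x`. As in `RDS`, `t_n` need not be strictly decreasing. -/
def IsJointlyRightContinuousOn (Φ : ι → X → X) (T : Set ι) : Prop :=
  ∀ t ∈ T, ∀ u : ℕ → ι, (∀ n, u n ∈ T) → Antitone u → Tendsto u atTop (𝓝 t) →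
    ∀ (v : ℕ → X) (x : X), Tendsto v atTop (𝓝 x) →
      Tendsto (fun n => Φ (u n) (v n)) atTop (𝓝 (Φ t x))

/-- Almost sure forward-invariance of `A` under a random family of homeomorphisms; this is
`RDS.ForwardInvariant` for an arbitrary state space and set of times. -/
def IsAEForwardInvariant (P : Measure Ω) (T : Set ι) (φ : ι → Ω → X ≃ₜ X) (A : Set X) : Prop :=
  ∀ᵐ ω ∂P, ∀ t ∈ T, φ t ω '' A ⊆ A

/-- Reverse-minimality of a random family of homeomorphisms; this is `RDS.ReverseMinimal` for an
arbitrary state space and set of times. -/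
def IsReverseMinimal (P : Measure Ω) (T : Set ι) (φ : ι → Ω → X ≃ₜ X) : Prop :=
  ∀ A : Set X, IsOpen A → IsAEForwardInvariant P T φ A → A = ∅ ∨ A = univ

variable [T2Space X] [FirstCountableTopology X] {P : Measure Ω} {T : Set ι} {K : Set X}

theorem IsJointlyRightContinuousOn.image_compl_subset_of_tendsto {Φ : ι → X ≃ₜ X}
    (hΦ : IsJointlyRightContinuousOn (fun t => ⇑(Φ t)) T) (hK : IsCompact K) {t : ι} (ht : t ∈ T)
    {u : ℕ → ι} (huT : ∀ n, u n ∈ T) (hu : Antitone u) (hlim : Tendsto u atTop (𝓝 t))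
    (hinv : ∀ n, Φ (u n) '' Kᶜ ⊆ Kᶜ) : Φ t '' Kᶜ ⊆ Kᶜ := by
  rintro _ ⟨y, hy, rfl⟩ hyK
  have hpre (n : ℕ) : (Φ (u n)).symm (Φ t y) ∈ K := by
    by_contra hn
    exact hinv n ⟨_, hn, (Φ (u n)).apply_symm_apply _⟩ hyK
  obtain ⟨z, hzK, g, hg, hz⟩ := hK.tendsto_subseq hpre
  have hΦz : Tendsto (fun _ : ℕ => Φ t y) atTop (𝓝 (Φ t z)) := by
    simpa only [Function.comp_apply, Homeomorph.apply_symm_apply] using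
      hΦ t ht (u ∘ g) (fun n => huT (g n)) (hu.comp_monotone hg.monotone)
        (hlim.comp hg.tendsto_atTop) _ z hz
  have hyz : y = z := (Φ t).injective (tendsto_nhds_unique tendsto_const_nhds hΦz)
  exact hy (hyz ▸ hzK)

variable [OrderTopology ι] [SecondCountableTopology ι] {φ : ι → Ω → X ≃ₜ X}

theorem isAEForwardInvariant_compl_of_forall_ae
    (hφ : ∀ ω, IsJointlyRightContinuousOn (fun t => ⇑(φ t ω)) T) (hK : IsCompact K)
    (hinv : ∀ t ∈ T, ∀ᵐ ω ∂P, φ t ω '' Kᶜ ⊆ Kᶜ) : IsAEForwardInvariant P T φ Kᶜ := by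
  obtain ⟨Q, hQT, hQ, happrox⟩ := exists_countable_forall_antitone_tendsto T
  filter_upwards [(ae_ball_iff hQ).2 fun t ht => hinv t (hQT ht)] with ω hω t ht
  obtain ⟨u, huQ, hu, hlim⟩ := happrox t ht
  exact (hφ ω).image_compl_subset_of_tendsto hK ht (fun n => hQT (huQ n)) hu hlim
    fun n => hω _ (huQ n)

theorem IsReverseMinimal.eq_empty_or_eq_univ_of_isCompact (hmin : IsReverseMinimal P T φ)
    (hφ : ∀ ω, IsJointlyRightContinuousOn (fun t => ⇑(φ t ω)) T) (hK : IsCompact K)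
    (hinv : ∀ t ∈ T, ∀ᵐ ω ∂P, φ t ω '' Kᶜ ⊆ Kᶜ) : K = ∅ ∨ K = univ := by
  have hcompl : Kᶜ = ∅ ∨ Kᶜ = univ :=
    hmin _ hK.isClosed.isOpen_compl (isAEForwardInvariant_compl_of_forall_ae hφ hK hinv)
  exact hcompl.symm.imp compl_univ_iff.1 compl_empty_iff.1

end Invariance

section Measurability

variable {Ω X : Type*} [MeasurableSpace Ω] [TopologicalSpace X]
  [TopologicalSpace.PseudoMetrizableSpace X] [SecondCountableTopology X] [MeasurableSpace X]
  [BorelSpace X] {f : Ω → X ≃ₜ X}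

theorem measurable_symm_apply_of_measurable_apply (hf : ∀ x, Measurable fun ω => f ω x) :
    Measurable fun p : Ω × X => (f p.1).symm p.2 := by
  let := TopologicalSpace.pseudoMetrizableSpacePseudoMetric X
  refine measurable_of_isClosed fun K hK => ?_
  obtain ⟨D, hDK, hD, hKD⟩ :=
    (TopologicalSpace.IsSeparable.of_separableSpace K).exists_countable_dense_subset
  have himage (ω : Ω) : f ω '' K = closure (f ω '' D) := by
    rw [← (f ω).image_closure, hKD.antisymm (closure_minimal hDK hK)]
  have hpreimage : (fun p : Ω × X => (f p.1).symm p.2) ⁻¹' K =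
      {p | ⨅ y ∈ D, edist p.2 (f p.1 y) = 0} := by
    ext p
    rw [mem_preimage, ← mem_preimage, ← (f p.1).image_eq_preimage_symm, himage,
      Metric.mem_closure_iff_infEDist_zero, Metric.infEDist, iInf_image, mem_ofPred_eq]
  rw [hpreimage]
  refine measurableSet_eq_fun (.biInf _ hD fun y _ => ?_) measurable_const
  exact measurable_snd.edist ((hf y).comp measurable_fst)

theorem measurable_measure_image (hf : ∀ x, Measurable fun ω => f ω x) (ρ : Measure X) [SFinite ρ]
    {A : Set X} (hA : MeasurableSet A) : Measurable fun ω => ρ (f ω '' A) := by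
  simp only [Homeomorph.image_eq_preimage_symm]
  exact measurable_measure_prodMk_left (measurable_symm_apply_of_measurable_apply hf hA)

end Measurability

section HeaviestPoints

variable {X : Type*} [MeasurableSpace X]

/-- The points of maximal `ρ`-mass: the largest atoms if `ρ` has any, and all points otherwise. -/
def heaviestPoints (ρ : Measure X) : Set X := {x | ∀ y, ρ {y} ≤ ρ {x}}

variable [MeasurableSingletonClass X] (ρ : Measure X) [IsFiniteMeasure ρ]

theorem finite_setOf_le_measure_singleton {ε : ℝ≥0∞} (hε : 0 < ε) : {x | ε ≤ ρ {x}}.Finite :=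
  ρ.finite_const_le_meas_of_disjoint_iUnion hε measurableSet_singleton
    (fun _ _ hxy => disjoint_singleton.2 hxy) (measure_ne_top _ _)

variable {ρ}

theorem finite_heaviestPoints {x : X} (hx : ρ {x} ≠ 0) : (heaviestPoints ρ).Finite :=
  (finite_setOf_le_measure_singleton ρ (pos_iff_ne_zero.2 hx)).subset fun _ hy => hy x

theorem nonempty_heaviestPoints {x : X} (hx : ρ {x} ≠ 0) : (heaviestPoints ρ).Nonempty := by
  obtain ⟨z, hxz, hz⟩ := exists_max_image _ (fun y => ρ {y})
    (finite_setOf_le_measure_singleton ρ (pos_iff_ne_zero.2 hx)) ⟨x, le_refl (ρ {x})⟩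
  refine ⟨z, fun y => ?_⟩
  obtain hy | hy := le_total (ρ {x}) (ρ {y})
  · exact hz y hy
  · exact hy.trans hxz

end HeaviestPoints

section ReverseInvariant

variable {Ω X : Type*} [MeasurableSpace Ω] [TopologicalSpace X] [MeasurableSpace X]

/-- `ρ` is, on average over `ω`, preserved by the inverse of the random homeomorphism `f ω`.
`RDS.ReverseStationary` asks this of `φ t` for every time `t`. -/
def IsReverseInvariant (P : Measure Ω) (f : Ω → X ≃ₜ X) (ρ : Measure X) : Prop :=
  ∀ A : Set X, MeasurableSet A → ρ A = ∫⁻ ω, ρ (f ω '' A) ∂P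

namespace IsReverseInvariant

variable {P : Measure Ω} {f : Ω → X ≃ₜ X} {ρ : Measure X}

theorem ae_image_compl_support_subset [TopologicalSpace.PseudoMetrizableSpace X]
    [SecondCountableTopology X] [BorelSpace X] [SFinite ρ] (hρ : IsReverseInvariant P f ρ)
    (hf : ∀ x, Measurable fun ω => f ω x) :
    ∀ᵐ ω ∂P, f ω '' ρ.supportᶜ ⊆ ρ.supportᶜ := by
  have hopen : IsOpen ρ.supportᶜ := Measure.isOpen_compl_support
  have hnull : ∫⁻ ω, ρ (f ω '' ρ.supportᶜ) ∂P = 0 := by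
    rw [← hρ _ hopen.measurableSet, Measure.measure_compl_support]
  filter_upwards
    [(lintegral_eq_zero_iff (measurable_measure_image hf ρ hopen.measurableSet)).1 hnull] with ω hω
  exact Measure.subset_compl_support_of_isOpen ((f ω).isOpenMap _ hopen) hω

variable [MeasurableSingletonClass X] [IsProbabilityMeasure P] [IsFiniteMeasure ρ]

theorem ae_apply_mem_heaviestPoints (hρ : IsReverseInvariant P f ρ) {x : X}
    (hx : x ∈ heaviestPoints ρ) : ∀ᵐ ω ∂P, f ω x ∈ heaviestPoints ρ := by
  have hmean : ∫⁻ ω, ρ {f ω x} ∂P = ρ {x} := by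
    simpa only [image_singleton] using (hρ {x} (measurableSet_singleton x)).symm
  have hconst : (fun ω => ρ {f ω x}) =ᵐ[P] fun _ => ρ {x} :=
    ae_eq_of_ae_le_of_lintegral_le (ae_of_all _ fun ω => hx (f ω x))
      (hmean ▸ measure_ne_top ρ _) aemeasurable_const (by simp [hmean])
  filter_upwards [hconst] with ω hω y
  exact (hx y).trans hω.ge

theorem ae_image_heaviestPoints (hρ : IsReverseInvariant P f ρ) (hfin : (heaviestPoints ρ).Finite) :
    ∀ᵐ ω ∂P, f ω '' heaviestPoints ρ = heaviestPoints ρ := by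
  filter_upwards [(ae_ball_iff hfin.countable).2 fun x hx => hρ.ae_apply_mem_heaviestPoints hx]
    with ω hω
  exact eq_of_subset_of_ncard_le (image_subset_iff.2 hω)
    (ncard_image_of_injective _ (f ω).injective).ge hfin

end IsReverseInvariant

end ReverseInvariant

section ReverseMinimal

variable {Ω ι X : Type*} [MeasurableSpace Ω] [LinearOrder ι] [TopologicalSpace ι] [OrderTopology ι]
  [SecondCountableTopology ι] [TopologicalSpace X] [MeasurableSpace X] {P : Measure Ω} {T : Set ι}
  {φ : ι → Ω → X ≃ₜ X} {ρ : Measure X}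

theorem IsReverseMinimal.isOpenPosMeasure [CompactSpace X] [TopologicalSpace.MetrizableSpace X]
    [BorelSpace X] [SFinite ρ] [NeZero ρ] (hmin : IsReverseMinimal P T φ)
    (hmeas : ∀ t ∈ T, ∀ x, Measurable fun ω => φ t ω x)
    (hφ : ∀ ω, IsJointlyRightContinuousOn (fun t => ⇑(φ t ω)) T)
    (hρ : ∀ t ∈ T, IsReverseInvariant P (φ t) ρ) : ρ.IsOpenPosMeasure := by
  have hsupp : ρ.support = univ :=
    (hmin.eq_empty_or_eq_univ_of_isCompact hφ Measure.isClosed_support.isCompact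
      fun t ht => (hρ t ht).ae_image_compl_support_subset (hmeas t ht)).resolve_left
      (Measure.nonempty_support (NeZero.ne ρ)).ne_empty
  refine ⟨fun U hU hne hU0 => hne.ne_empty ?_⟩
  simpa only [hsupp, compl_univ, subset_empty_iff] using
    Measure.subset_compl_support_of_isOpen hU hU0

theorem IsReverseMinimal.nullSingletonClass [T2Space X] [FirstCountableTopology X] [Infinite X]
    [MeasurableSingletonClass X] [IsProbabilityMeasure P] [IsFiniteMeasure ρ]
    (hmin : IsReverseMinimal P T φ)
    (hφ : ∀ ω, IsJointlyRightContinuousOn (fun t => ⇑(φ t ω)) T)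
    (hρ : ∀ t ∈ T, IsReverseInvariant P (φ t) ρ) : NullSingletonClass ρ := by
  refine ⟨fun x => by_contra fun hx => ?_⟩
  have hfin : (heaviestPoints ρ).Finite := finite_heaviestPoints hx
  have hinv : ∀ t ∈ T, ∀ᵐ ω ∂P, φ t ω '' (heaviestPoints ρ)ᶜ ⊆ (heaviestPoints ρ)ᶜ := by
    intro t ht
    filter_upwards [(hρ t ht).ae_image_heaviestPoints hfin] with ω hω
    rw [image_compl_eq (φ t ω).bijective, hω]
  obtain hempty | huniv := hmin.eq_empty_or_eq_univ_of_isCompact hφ hfin.isCompact hinv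
  · exact (nonempty_heaviestPoints hx).ne_empty hempty
  · exact infinite_univ (huniv ▸ hfin)

theorem reverseMinimal_reverseStationary_atomless_fullSupport_general [CompactSpace X]
    [TopologicalSpace.MetrizableSpace X] [Infinite X] [BorelSpace X] [IsProbabilityMeasure P]
    [IsFiniteMeasure ρ] [NeZero ρ] (hmin : IsReverseMinimal P T φ)
    (hmeas : ∀ t ∈ T, ∀ x, Measurable fun ω => φ t ω x)
    (hφ : ∀ ω, IsJointlyRightContinuousOn (fun t => ⇑(φ t ω)) T)
    (hρ : ∀ t ∈ T, IsReverseInvariant P (φ t) ρ) : NullSingletonClass ρ ∧ ρ.IsOpenPosMeasure :=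
  ⟨hmin.nullSingletonClass hφ hρ, hmin.isOpenPosMeasure hmeas hφ hρ⟩

end ReverseMinimal

theorem infinite_unitAddCircle : Infinite UnitAddCircle :=
  (AddCircle.equivIco 1 0).infinite_iff.2 (Ico.infinite (by norm_num))

theorem RDS.measurable_apply {Ω : Type} [MeasurableSpace Ω] (S : RDS Ω) {t : ℝ} (ht : t ∈ S.T)
    (x : UnitAddCircle) : Measurable fun ω => S.φ t ω x :=
  Measurable.mono ((S.φ_meas t ht).comp (@measurable_prodMk_right _ _ (S.F t) _ x))
    (S.F_le t ht) le_rfl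

/-- if `φ` has reverse-minimal dynamics then every reverse-stationary probability
measure is atomless and has full support. -/
theorem reverseMinimal_reverseStationary_atomless_fullSupport
    {Ω : Type} [MeasurableSpace Ω] (S : RDS Ω) (h : S.ReverseMinimal) :
    ∀ ρ : Measure UnitAddCircle, IsProbabilityMeasure ρ → S.ReverseStationary ρ →
      Atomless ρ ∧ FullSupport ρ := by
  intro ρ _ hρ
  have := S.P_prob
  have := infinite_unitAddCircle
  obtain ⟨_, _⟩ := reverseMinimal_reverseStationary_atomless_fullSupport_general (P := S.P)
    (T := S.T) (φ := S.φ) h (fun t ht => S.measurable_apply ht) S.φ_cadlag_right hρ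
  exact ⟨measure_singleton, fun U hU hne => hU.measure_pos ρ hne⟩
end
end

section
/- For an invertible RDS φ on 𝕊¹, the probability ℙ(Ω_c) of the set of contractive sample points is equal to either 0 or 1. -/
open MeasureTheory Filter Topology Set ENNReal

noncomputable section

/-!
Since `φ (s + t) ω = φ t (θ s ω) ∘ φ s ω`, the homeomorphism `φ s ω` carries the crack points of
`ω` to those of `θ s ω`, so the contractive set is invariant under every `θ s`. If it belongs to
the future σ-algebra, it is therefore independent of each `F t`, hence of the future σ-algebra,
hence of itself, and its probability is `0` or `1`.

For measurability, a crack point exists iff for every `n` the complement of some closed ball of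
radius `1 / (n + 1)`, centred in a countable dense set, has images of vanishing measure; the
converse direction is the Lebesgue number lemma applied to the complements of closed sets violating
the crack point condition. For open `U` the map `t ↦ μ (φ t ω '' U)` is lower semicontinuous from
the right, by inner regularity and compactness. Hence convergence to `0` along all times amounts to
convergence along a countable set of times that is dense from the right.
-/

open ProbabilityTheory

theorem measure_eq_zero_or_one_of_preimage_eq_of_indep_comap {Ω ι : Type*} {mΩ : MeasurableSpace Ω}
    {P : Measure Ω} [IsZeroOrProbabilityMeasure P] {F : ι → MeasurableSpace Ω}
    (hF_le : ∀ i, F i ≤ mΩ) (hF_dir : Directed (· ≤ ·) F) {θ : ι → Ω → Ω}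
    (hθ : ∀ i, Indep (F i) ((⨆ j, F j).comap (θ i)) P)
    {A : Set Ω} (hA : MeasurableSet[⨆ j, F j] A) (hA_inv : ∀ i, θ i ⁻¹' A = A) :
    P A = 0 ∨ P A = 1 := by
  have hσA_le {m' : MeasurableSpace Ω} (h : MeasurableSet[m'] A) :
      MeasurableSpace.generateFrom {A} ≤ m' :=
    MeasurableSpace.generateFrom_le fun _ hB ↦ mem_singleton_iff.1 hB ▸ h
  have hFA (i : ι) : Indep (F i) (MeasurableSpace.generateFrom {A}) P :=
    indep_of_indep_of_le_right (hθ i) (hσA_le ⟨A, hA, hA_inv i⟩)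
  have hsup := indep_iSup_of_directed_le hFA hF_le (hσA_le (iSup_le hF_le _ hA)) hF_dir
  exact measure_eq_zero_or_one_of_indepSet_self (indep_of_indep_of_le_left hsup (hσA_le hA))

theorem exists_countable_subset_subset_closure {X : Type*} [TopologicalSpace X]
    [SecondCountableTopology X] (s : Set X) : ∃ D ⊆ s, D.Countable ∧ s ⊆ closure D := by
  obtain ⟨D, hD_count, hD_dense⟩ := TopologicalSpace.exists_countable_dense s
  refine ⟨(↑) '' D, Subtype.coe_image_subset s D, hD_count.image _, ?_⟩
  exact Subtype.dense_iff.1 hD_dense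

theorem le_of_lowerSemicontinuousWithinAt_of_mem_closure {α β : Type*} [TopologicalSpace α]
    [LinearOrder β] {f : α → β} {s : Set α} {x : α} {c : β}
    (hf : LowerSemicontinuousWithinAt f s x) (hx : x ∈ closure s) (hc : ∀ y ∈ s, f y ≤ c) :
    f x ≤ c := by
  have := mem_closure_iff_nhdsWithin_neBot.1 hx
  exact lowerSemicontinuousWithinAt_iff_frequently.1 hf c
    (eventually_mem_nhdsWithin.mono hc).frequently

section RightDense

variable {α Ω : Type*} [LinearOrder α] [TopologicalSpace α]

theorem exists_countable_subset_forall_mem_closure_inter_Ici [OrderTopology α]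
    [SecondCountableTopology α] (T : Set α) :
    ∃ D ⊆ T, D.Countable ∧ ∀ t ∈ T, t ∈ closure (D ∩ Ici t) := by
  obtain ⟨D, hDT, hD_count, hD_dense⟩ := exists_countable_subset_subset_closure T
  let E : Set α := {t ∈ T | 𝓝[T ∩ Ioi t] t = ⊥}
  refine ⟨D ∪ E, union_subset hDT (sep_subset _ _),
    hD_count.union countable_setOfPred_isolated_right_within, fun t ht ↦ ?_⟩
  by_cases hiso : 𝓝[T ∩ Ioi t] t = ⊥
  · exact subset_closure ⟨Or.inr ⟨ht, hiso⟩, self_mem_Ici⟩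
  have hT_Ioi : T ∩ Ioi t ⊆ closure (D ∩ Ioi t) :=
    (inter_subset_inter_left _ hD_dense).trans isOpen_Ioi.closure_inter
  exact closure_mono (inter_subset_inter subset_union_left Ioi_subset_Ici_self)
    (closure_minimal hT_Ioi isClosed_closure (mem_closure_iff_nhdsWithin_neBot.2 ⟨hiso⟩))

theorem tendsto_zero_atTop_inf_principal_iff {h : α → ℝ≥0∞} {D T : Set α} (hDT : D ⊆ T)
    (hD : ∀ t ∈ T, t ∈ closure (D ∩ Ici t))
    (hh : ∀ t ∈ T, LowerSemicontinuousWithinAt h (T ∩ Ici t) t) :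
    Tendsto h (atTop ⊓ 𝓟 T) (𝓝 0) ↔ Tendsto h (atTop ⊓ 𝓟 D) (𝓝 0) := by
  refine ⟨fun hT ↦ hT.mono_left (inf_le_inf_left _ (principal_mono.2 hDT)), fun hD_lim ↦ ?_⟩
  simp only [ENNReal.tendsto_nhds_zero, eventually_inf_principal] at hD_lim ⊢
  intro ε hε
  filter_upwards [eventually_forall_ge_atTop.2 (hD_lim ε hε)] with t ht htT
  exact le_of_lowerSemicontinuousWithinAt_of_mem_closure
    ((hh t htT).mono (inter_subset_inter_left _ hDT)) (hD t htT) fun s hs ↦ ht s hs.2 hs.1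

theorem measurableSet_setOf_tendsto_zero_atTop_inf_principal [OrderTopology α]
    [SecondCountableTopology α] {mΩ : MeasurableSpace Ω} {T : Set α} {h : α → Ω → ℝ≥0∞}
    (hh_meas : ∀ t ∈ T, Measurable (h t))
    (hh_lsc : ∀ ω, ∀ t ∈ T, LowerSemicontinuousWithinAt (h · ω) (T ∩ Ici t) t) :
    MeasurableSet {ω | Tendsto (h · ω) (atTop ⊓ 𝓟 T) (𝓝 0)} := by
  obtain ⟨D, hDT, hD_count, hD⟩ := exists_countable_subset_forall_mem_closure_inter_Ici T
  have := hD_count.to_subtype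
  simp only [tendsto_zero_atTop_inf_principal_iff hDT hD (hh_lsc _)]
  simp only [← map_comap_setCoe_val, tendsto_map'_iff]
  exact measurableSet_tendsto _ fun t : D ↦ hh_meas t (hDT t.2)

end RightDense

section ImageOfOpen

variable {X Y : Type*} [TopologicalSpace X] [TopologicalSpace Y]

theorem eventually_subset_image_of_isCompact {ι : Type*} [CompactSpace X] [T2Space Y]
    {l : Filter ι} {f : ι → X → Y} {g : X → Y} (hf_surj : ∀ i, Function.Surjective (f i))
    (hg_inj : Function.Injective g)
    (hfg : ∀ x, Tendsto (fun p : ι × X ↦ f p.1 p.2) (l ×ˢ 𝓝 x) (𝓝 (g x)))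
    {U : Set X} (hU : IsOpen U) {K : Set Y} (hK : IsCompact K) (hKU : K ⊆ g '' U) :
    ∀ᶠ i in l, K ⊆ f i '' U := by
  have h_ne : ∀ q ∈ Uᶜ ×ˢ K, ∀ᶠ p : ι × X × Y in l ×ˢ 𝓝 q, f p.1 p.2.1 ≠ p.2.2 := by
    rintro ⟨x, y⟩ ⟨hx, hy⟩
    obtain ⟨z, hz, rfl⟩ := hKU hy
    have hxz : g x ≠ g z := fun h ↦ hx (hg_inj h ▸ hz)
    have h_lim : Tendsto (fun p : ι × X × Y ↦ (f p.1 p.2.1, p.2.2)) (l ×ˢ 𝓝 (x, g z))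
        (𝓝 (g x, g z)) := by
      have h_snd : Tendsto (Prod.snd : ι × X × Y → X × Y) (l ×ˢ 𝓝 (x, g z)) (𝓝 (x, g z)) :=
        tendsto_snd
      exact ((hfg x).comp (tendsto_fst.prodMk h_snd.fst_nhds)).prodMk_nhds h_snd.snd_nhds
    exact h_lim.eventually (isClosed_diagonal.isOpen_compl.mem_nhds hxz)
  have h_unif : ∀ᶠ p : ι × X × Y in l ×ˢ 𝓝ˢ (Uᶜ ×ˢ K), f p.1 p.2.1 ≠ p.2.2 :=
    (hU.isClosed_compl.isCompact.prod hK).mem_prod_nhdsSet_of_forall h_ne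
  have h_disj : ∀ᶠ i in l, ∀ q ∈ Uᶜ ×ˢ K, f i q.1 ≠ q.2 :=
    eventually_prod_principal_iff.1 (h_unif.filter_mono (prod_mono_right l principal_le_nhdsSet))
  filter_upwards [h_disj] with i hi y hy
  obtain ⟨x, rfl⟩ := hf_surj i y
  exact mem_image_of_mem _ (of_not_not fun hx ↦ hi (x, f i x) ⟨hx, hy⟩ rfl)

theorem eventually_lt_measure_image {ι : Type*} [CompactSpace X] [T2Space Y] [MeasurableSpace Y]
    {μ : Measure Y} [μ.Regular] {l : Filter ι} {f : ι → X → Y} {g : X → Y}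
    (hf_surj : ∀ i, Function.Surjective (f i))
    (hg_inj : Function.Injective g) (hg_open : IsOpenMap g)
    (hfg : ∀ x, Tendsto (fun p : ι × X ↦ f p.1 p.2) (l ×ˢ 𝓝 x) (𝓝 (g x)))
    {U : Set X} (hU : IsOpen U) {c : ℝ≥0∞} (hc : c < μ (g '' U)) :
    ∀ᶠ i in l, c < μ (f i '' U) := by
  obtain ⟨K, hKU, hK, hcK⟩ := (hg_open U hU).exists_lt_isCompact hc
  filter_upwards [eventually_subset_image_of_isCompact hf_surj hg_inj hfg hU hK hKU] with i hi
  exact hcK.trans_le (measure_mono hi)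

end ImageOfOpen

theorem measurableSet_setOf_mem_closure_image {Ω X Y : Type*} {mΩ : MeasurableSpace Ω}
    [TopologicalSpace X] [SecondCountableTopology X] [PseudoEMetricSpace Y]
    [SecondCountableTopology Y] [MeasurableSpace Y] [OpensMeasurableSpace Y] {f : Ω → X → Y}
    (hf_cont : ∀ ω, Continuous (f ω)) (hf_meas : ∀ x, Measurable (f · x)) (s : Set X) :
    MeasurableSet {p : Ω × Y | p.2 ∈ closure (f p.1 '' s)} := by
  obtain ⟨D, hDs, hD_count, hD_dense⟩ := exists_countable_subset_subset_closure s
  have h_closure (ω : Ω) : closure (f ω '' s) = closure (f ω '' D) := by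
    refine (closure_minimal ?_ isClosed_closure).antisymm (closure_mono (image_mono hDs))
    exact (image_mono hD_dense).trans (image_closure_subset_closure_image (hf_cont ω))
  simp only [h_closure, Metric.mem_closure_iff_infEDist_zero, Metric.infEDist, iInf_image]
  refine Measurable.biInf D hD_count ?_ (measurableSet_singleton 0)
  exact fun x _ ↦ measurable_snd.edist ((hf_meas x).comp measurable_fst)

theorem measurable_measure_image_of_isOpen {Ω X Y : Type*} {mΩ : MeasurableSpace Ω}
    [TopologicalSpace X] [SecondCountableTopology X] [PseudoEMetricSpace Y]
    [SecondCountableTopology Y] [MeasurableSpace Y] [OpensMeasurableSpace Y] (μ : Measure Y)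
    [SFinite μ] {f : Ω → X ≃ₜ Y} (hf_meas : ∀ x, Measurable (f · x)) {U : Set X} (hU : IsOpen U) :
    Measurable fun ω ↦ μ (f ω '' U) := by
  have h_closure (ω : Ω) : closure (f ω '' Uᶜ) = (f ω '' U)ᶜ := by
    rw [((f ω).isClosed_image.2 hU.isClosed_compl).closure_eq, image_compl_eq (f ω).bijective]
  have h_graph :=
    (measurableSet_setOf_mem_closure_image (fun ω ↦ (f ω).continuous) hf_meas Uᶜ).compl
  convert measurable_measure_prodMk_left (ν := μ) h_graph using 3 with ω
  simp only [h_closure, preimage_compl, preimage_ofPred_eq, ofPred_mem_eq, compl_compl]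

section CrackPoint

variable {ι X Y : Type*} [TopologicalSpace X] [MeasurableSpace Y] {μ : Measure Y} {l : Filter ι}
  {f g : ι → X → Y} {r : X}

/-- `r` is a crack point of the family `f` along `l` if the `f i`-image of every closed set avoiding
`r` has asymptotically vanishing measure. -/
def IsCrackPoint (μ : Measure Y) (l : Filter ι) (f : ι → X → Y) (r : X) : Prop :=
  ∀ G : Set X, IsClosed G → r ∉ G → Tendsto (fun i ↦ μ (f i '' G)) l (𝓝 0)

theorem isCrackPoint_congr (hfg : f =ᶠ[l] g) : IsCrackPoint μ l f r ↔ IsCrackPoint μ l g r :=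
  forall₃_congr fun G _ _ ↦ tendsto_congr' (hfg.mono fun i hi ↦ by simp only [hi])

theorem isCrackPoint_map_iff {κ : Type*} {u : κ → ι} {k : Filter κ} :
    IsCrackPoint μ (map u k) f r ↔ IsCrackPoint μ k (f ∘ u) r :=
  forall₃_congr fun _ _ _ ↦ tendsto_map'_iff

theorem isCrackPoint_comp_homeomorph_iff {Z : Type*} [TopologicalSpace Z] (e : Z ≃ₜ X) {z : Z} :
    IsCrackPoint μ l (fun i ↦ f i ∘ e) z ↔ IsCrackPoint μ l f (e z) := by
  refine ⟨fun h G hG hz ↦ ?_, fun h G hG hz ↦ ?_⟩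
  · simpa only [image_comp, image_preimage_eq _ e.surjective] using
      h (e ⁻¹' G) (hG.preimage e.continuous) hz
  · simpa only [image_comp] using
      h (e '' G) (e.isClosed_image.2 hG) (e.injective.mem_set_image.not.2 hz)

end CrackPoint

theorem exists_isCrackPoint_iff_forall_exists_closedBall {ι κ X Y : Type*} [PseudoMetricSpace X]
    [CompactSpace X] [MeasurableSpace Y] {μ : Measure Y} {l : Filter ι} {f : ι → X → Y}
    {d : κ → X} (hd : DenseRange d) :
    (∃ r, IsCrackPoint μ l f r) ↔ ∀ n : ℕ, ∃ j,
      Tendsto (fun i ↦ μ (f i '' (Metric.closedBall (d j) (1 / (n + 1)))ᶜ)) l (𝓝 0) := by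
  have h_mono {G H : Set X} (hGH : G ⊆ H) (hH : Tendsto (fun i ↦ μ (f i '' H)) l (𝓝 0)) :
      Tendsto (fun i ↦ μ (f i '' G)) l (𝓝 0) :=
    tendsto_of_tendsto_of_tendsto_of_le_of_le tendsto_const_nhds hH (fun _ ↦ zero_le)
      fun _ ↦ measure_mono (image_mono hGH)
  refine ⟨fun ⟨r, hr⟩ n ↦ ?_, fun h ↦ ?_⟩
  · obtain ⟨j, hj⟩ := hd.exists_dist_lt r (Nat.one_div_pos_of_nat (α := ℝ) (n := n))
    exact ⟨j, h_mono (compl_subset_compl.2 Metric.ball_subset_closedBall)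
      (hr (Metric.ball (d j) (1 / (n + 1)))ᶜ Metric.isOpen_ball.isClosed_compl (by simpa using hj))⟩
  · by_contra! h_none
    simp only [IsCrackPoint, not_forall] at h_none
    choose G hG_closed hG_notMem hG_lim using h_none
    obtain ⟨δ, hδ_pos, hδ⟩ := lebesgue_number_lemma_of_metric isCompact_univ
      (fun r ↦ (hG_closed r).isOpen_compl) fun r _ ↦ mem_iUnion.2 ⟨r, hG_notMem r⟩
    obtain ⟨n, hn⟩ := exists_nat_one_div_lt hδ_pos
    obtain ⟨j, hj⟩ := h n
    obtain ⟨r, hr⟩ := hδ (d j) (mem_univ _)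
    exact hG_lim r (h_mono (subset_compl_comm.1 ((Metric.closedBall_subset_ball hn).trans hr)) hj)

theorem map_add_left_atTop_inf_principal {T : Set ℝ} {s : ℝ}
    (hT : ∀ t, 0 ≤ t → (s + t ∈ T ↔ t ∈ T)) :
    map (s + ·) (atTop ⊓ 𝓟 T) = atTop ⊓ 𝓟 T := by
  have h_atTop : comap (s + ·) atTop = atTop := (OrderIso.addLeft s).comap_atTop
  have h_comap : comap (s + ·) (atTop ⊓ 𝓟 T) = atTop ⊓ 𝓟 T := by
    ext A
    rw [comap_inf, comap_principal, h_atTop, mem_inf_principal, mem_inf_principal]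
    exact congr_sets ((eventually_ge_atTop 0).mono fun t ht ↦ imp_congr_left (hT t ht))
  conv_lhs => rw [← h_comap]
  exact map_comap_of_surjective (add_left_surjective s) _

theorem exists_antitone_subseq_of_tendsto_of_le {α : Type*} [LinearOrder α] [TopologicalSpace α]
    [OrderClosedTopology α] {u : ℕ → α} {a : α} (hu : Tendsto u atTop (𝓝 a)) (ha : ∀ n, a ≤ u n) :
    ∃ g : ℕ → ℕ, StrictMono g ∧ Antitone (u ∘ g) := by
  obtain ⟨g, hg | hg⟩ := exists_increasing_or_nonincreasing_subseq (· < ·) u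
  · have h_mono : StrictMono (u ∘ g) := fun m n ↦ hg m n
    have h_le := h_mono.monotone.ge_of_tendsto (hu.comp g.strictMono.tendsto_atTop) 1
    exact absurd (h_mono zero_lt_one) (h_le.trans (ha _)).not_gt
  · exact ⟨g, g.strictMono, antitone_iff_forall_lt.2 fun m n hmn ↦ not_lt.1 (hg m n hmn)⟩

section Cocycle

theorem isCrackPoint_shift_iff {Ω X : Type*} [TopologicalSpace X] [MeasurableSpace X]
    {μ : Measure X} {T : Set ℝ} {φ : ℝ → Ω → X ≃ₜ X} {θ : ℝ → Ω → Ω} {s : ℝ}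
    (hT : ∀ t, 0 ≤ t → (s + t ∈ T ↔ t ∈ T))
    (hφ : ∀ t ∈ T, ∀ ω x, φ (s + t) ω x = φ t (θ s ω) (φ s ω x)) {ω : Ω} {r : X} :
    IsCrackPoint μ (atTop ⊓ 𝓟 T) (fun t ↦ φ t (θ s ω)) (φ s ω r) ↔
      IsCrackPoint μ (atTop ⊓ 𝓟 T) (fun t ↦ φ t ω) r := by
  conv_rhs => rw [← map_add_left_atTop_inf_principal hT]
  rw [isCrackPoint_map_iff, ← isCrackPoint_comp_homeomorph_iff]
  refine isCrackPoint_congr ?_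
  filter_upwards [mem_inf_of_right (mem_principal_self T)] with t ht
  exact (funext (hφ t ht ω)).symm

variable {Ω X : Type*} [MetricSpace X] [CompactSpace X] [MeasurableSpace X] [BorelSpace X]
  {T : Set ℝ} {φ : ℝ → Ω → X ≃ₜ X}

theorem lowerSemicontinuousWithinAt_measure_image (μ : Measure X) [IsFiniteMeasure μ]
    {φ : ℝ → X ≃ₜ X} {s : Set ℝ} {t : ℝ}
    (hφ : ∀ x, ContinuousWithinAt (fun p : ℝ × X ↦ φ p.1 p.2) (s ×ˢ univ) (t, x))
    {U : Set X} (hU : IsOpen U) :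
    LowerSemicontinuousWithinAt (fun u ↦ μ (φ u '' U)) s t := by
  have hφ_lim (x : X) : Tendsto (fun p : ℝ × X ↦ φ p.1 p.2) (𝓝[s] t ×ˢ 𝓝 x) (𝓝 (φ t x)) := by
    simpa only [ContinuousWithinAt, nhdsWithin_prod_eq, nhdsWithin_univ] using hφ x
  exact fun c hc ↦ eventually_lt_measure_image (fun u ↦ (φ u).surjective) (φ t).injective
    (φ t).isOpenMap hφ_lim hU hc

theorem measurableSet_setOf_exists_isCrackPoint (μ : Measure X) [IsFiniteMeasure μ]
    {F : ℝ → MeasurableSpace Ω}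
    (hφ_meas : ∀ t ∈ T, ∀ x, Measurable[F t] (φ t · x))
    (hφ_cont : ∀ ω, ∀ t ∈ T, ∀ x,
      ContinuousWithinAt (fun p : ℝ × X ↦ φ p.1 ω p.2) ((T ∩ Ici t) ×ˢ univ) (t, x)) :
    MeasurableSet[⨆ t ∈ T, F t] {ω | ∃ r, IsCrackPoint μ (atTop ⊓ 𝓟 T) (fun t ↦ φ t ω) r} := by
  obtain ⟨D, hD_count, hD_dense⟩ := TopologicalSpace.exists_countable_dense X
  have := hD_count.to_subtype
  simp only [exists_isCrackPoint_iff_forall_exists_closedBall hD_dense.denseRange_val,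
    ofPred_forall, ofPred_exists]
  refine .iInter fun n ↦ .iUnion fun x ↦ ?_
  have hU : IsOpen (Metric.closedBall (x : X) (1 / (n + 1)))ᶜ :=
    Metric.isClosed_closedBall.isOpen_compl
  refine measurableSet_setOf_tendsto_zero_atTop_inf_principal (fun t ht ↦ ?_)
    fun ω t ht ↦ lowerSemicontinuousWithinAt_measure_image μ (hφ_cont ω t ht) hU
  exact (measurable_measure_image_of_isOpen (mΩ := F t) μ (hφ_meas t ht) hU).mono
    (le_iSup₂_of_le t ht le_rfl) le_rfl

theorem prob_contractive_zero_or_one_general {mΩ : MeasurableSpace Ω} (μ : Measure X)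
    [IsFiniteMeasure μ] (hT : ∀ s ∈ T, ∀ t, 0 ≤ t → (s + t ∈ T ↔ t ∈ T))
    {F : ℝ → MeasurableSpace Ω} (hF_le : ∀ t ∈ T, F t ≤ mΩ) (hF_mono : MonotoneOn F T)
    {P : Measure Ω} [IsProbabilityMeasure P] {θ : ℝ → Ω → Ω}
    (hθ : ∀ t ∈ T, Indep (F t) ((⨆ s ∈ T, F s).comap (θ t)) P)
    (hφ_meas : ∀ t ∈ T, ∀ x, Measurable[F t] (φ t · x))
    (hφ_cocycle : ∀ s ∈ T, ∀ t ∈ T, ∀ ω x, φ (s + t) ω x = φ t (θ s ω) (φ s ω x))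
    (hφ_cont : ∀ ω, ∀ t ∈ T, ∀ x,
      ContinuousWithinAt (fun p : ℝ × X ↦ φ p.1 ω p.2) ((T ∩ Ici t) ×ˢ univ) (t, x)) :
    P {ω | ∃ r, IsCrackPoint μ (atTop ⊓ 𝓟 T) (fun t ↦ φ t ω) r} = 0 ∨
      P {ω | ∃ r, IsCrackPoint μ (atTop ⊓ 𝓟 T) (fun t ↦ φ t ω) r} = 1 := by
  have h_meas := measurableSet_setOf_exists_isCrackPoint μ hφ_meas hφ_cont
  have hF_iSup : ⨆ t ∈ T, F t = ⨆ t : T, F t := iSup_subtype'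
  rw [hF_iSup] at h_meas hθ
  refine measure_eq_zero_or_one_of_preimage_eq_of_indep_comap (F := fun t : T ↦ F t)
    (θ := fun t ↦ θ t) (fun t ↦ hF_le t t.2) ?_ (fun t ↦ hθ t t.2) h_meas fun t ↦ ?_
  · exact directed_of_isDirected_le fun s t hst ↦ hF_mono s.2 t.2 hst
  · ext ω
    exact (φ t ω).surjective.exists.trans
      (exists_congr fun r ↦ isCrackPoint_shift_iff (hT t t.2) (hφ_cocycle t t.2))

end Cocycle

namespace RDS

variable {Ω : Type} [MeasurableSpace Ω] (S : RDS Ω)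

theorem add_mem_T_iff {s : ℝ} (hs : s ∈ S.T) {t : ℝ} (ht : 0 ≤ t) : s + t ∈ S.T ↔ t ∈ S.T := by
  rcases S.T_cases with hT | hT <;> rw [hT] at hs ⊢
  · obtain ⟨m, rfl⟩ := hs
    refine ⟨fun ⟨n, hn⟩ ↦ ⟨n - m, ?_⟩, fun ⟨n, hn⟩ ↦ ⟨m + n, by simp only [Nat.cast_add, hn]⟩⟩
    have hmn : m ≤ n := Nat.cast_le.1 ((le_add_of_nonneg_right ht).trans_eq hn.symm)
    simp only [Nat.cast_sub hmn, hn, add_sub_cancel_left]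
  · exact iff_of_true (add_nonneg hs ht) ht

theorem monotoneOn_F : MonotoneOn S.F S.T := fun s hs t ht hst ↦ S.F_mono s hs t ht hst

theorem indep_comap_θ {t : ℝ} (ht : t ∈ S.T) :
    Indep (S.F t) ((⨆ s ∈ S.T, S.F s).comap (S.θ t)) S.P := by
  rw [Indep_iff]
  rintro E _ hE ⟨A, hA, rfl⟩
  have hA' : MeasurableSet A := iSup₂_le S.F_le A hA
  rw [S.θ_indep t ht E A hE hA, (S.θ_preserving t ht).measure_preimage hA'.nullMeasurableSet]

theorem measurable_φ_apply {t : ℝ} (ht : t ∈ S.T) (x : UnitAddCircle) :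
    Measurable[S.F t] (S.φ t · x) :=
  (S.φ_meas t ht).comp (@measurable_prodMk_right _ _ (S.F t) _ x)

theorem continuousWithinAt_φ_Ici (ω : Ω) {t : ℝ} (ht : t ∈ S.T) (x : UnitAddCircle) :
    ContinuousWithinAt (fun p : ℝ × UnitAddCircle ↦ S.φ p.1 ω p.2) ((S.T ∩ Ici t) ×ˢ univ)
      (t, x) := by
  refine tendsto_of_subseq_tendsto fun u hu ↦ ?_
  obtain ⟨hu_lim, hu_mem⟩ := tendsto_nhdsWithin_iff.1 hu
  obtain ⟨N, hN⟩ := eventually_atTop.1 hu_mem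
  replace hN (n : ℕ) := (hN (n + N) le_add_self).1
  have hu_lim_fst : Tendsto (fun n ↦ (u (n + N)).1) atTop (𝓝 t) :=
    hu_lim.fst_nhds.comp (tendsto_add_atTop_nat N)
  obtain ⟨g, hg_mono, hg_anti⟩ :=
    exists_antitone_subseq_of_tendsto_of_le hu_lim_fst fun n ↦ (hN n).2
  have hg_lim : Tendsto (fun n ↦ u (g n + N)) atTop (𝓝 (t, x)) :=
    hu_lim.comp ((tendsto_add_atTop_nat N).comp hg_mono.tendsto_atTop)
  exact ⟨fun n ↦ g n + N, S.φ_cadlag_right ω t ht _ (fun n ↦ (hN (g n)).1) hg_anti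
    hg_lim.fst_nhds _ x hg_lim.snd_nhds⟩

end RDS

/-- the probability of the set of contractive sample points is `0` or `1`. -/
theorem prob_contractive_zero_or_one
    {Ω : Type} [MeasurableSpace Ω] (S : RDS Ω) :
    S.P S.Ωc = 0 ∨ S.P S.Ωc = 1 :=
  have := S.P_prob
  prob_contractive_zero_or_one_general volume (fun _ hs _ ↦ S.add_mem_T_iff hs) S.F_le
    S.monotoneOn_F (fun _ ↦ S.indep_comap_θ) (fun _ ↦ S.measurable_φ_apply) S.φ_cocycle
    fun ω _ ↦ S.continuousWithinAt_φ_Ici ω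
end
end
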